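/- Let 0<c₁<⋯<c_m be non-integer reals. For every ε>0 there is a constant C_ε depending only on c₁,…,c_m, m, ε such that for every δ>0 and every (ξ₁,…,ξ_m)∈ℝ^m, the number of δ-jumps of the sequence of exponential sums satisfies 𝒩_δ( (1/N) ∑_{n=1}^{N} e(ξ₁⌊n^{c₁}⌋+⋯+ξ_m⌊n^{c_m}⌋) )_{N∈ℕ} ≤ C_ε δ^{−(2+ε)}, uniformly in ξ₁,…,ξ_m. -/

import Mathlib

/-!
An average over `n ≤ N` moves slowly, so a jump of size `δ` raises `log N` by at least `δ / 2`, and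
jumps can be counted by confining them to a short range of `log N`. Since `⌊n ^ cᵢ⌋` is an integer,
each `ξᵢ` may be reduced to `|ξᵢ| ≤ 1 / 2`. Put `S N = ∑ i, |ξᵢ| * N ^ cᵢ`. As long as `S N` is much
smaller than `δ` the average is within `δ / 2` of `1`. Once both `N` and `S N` exceed a fixed power
of `1 / δ` it has modulus below `δ / 2`. Since `S` grows at least like `N ^ min cᵢ`, only
`O(δ⁻¹ log (1 / δ))` jumps fit in between.

The decay of the average is first proved for the phase `∑ i, θᵢ * n ^ cᵢ`. By a Vandermonde argument
one of several consecutive derivatives of the phase is as large as `S N` allows, and Weyl's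
inequality applies to its Taylor polynomials on short blocks. The fractional parts of `n ^ cᵢ` are
then introduced one index at a time: a partition of the circle into tent functions approximates
`e(-ξᵢ {n ^ cᵢ})` by a combination of the characters `e(l * n ^ cᵢ)`, which replace `ξᵢ` by
`ξᵢ + l`. Because `|ξᵢ| ≤ 1 / 2`, this does not decrease `S`.
-/

open MeasureTheory Filter Finset
open scoped ENNReal NNReal

noncomputable section

/-- `e(x) = e^{2πix}`. -/
def eC (x : ℝ) : ℂ := Complex.exp (2 * Real.pi * Complex.I * x)

/-- The exponential sum `(1/N) ∑_{n=1}^{N} e(ξ₁⌊n^{c₁}⌋ + ⋯ + ξ_m⌊n^{c_m}⌋)`. -/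
def expSum (m : ℕ) (c : Fin m → ℝ) (ξ : Fin m → ℝ) (N : ℕ) : ℂ :=
  (N : ℂ)⁻¹ * ∑ n ∈ Finset.Icc 1 N, eC (∑ i, ξ i * (⌊(n : ℝ) ^ c i⌋ : ℝ))

open scoped ComplexConjugate FourierTransform fwdDiff

/-! ### The additive character -/

lemma eC_eq_fourierChar (x : ℝ) : eC x = 𝐞 x := by
  rw [Real.fourierChar_apply, eC]
  congr 1
  push_cast
  ring

lemma eC_zero : eC 0 = 1 := by simp [eC]

lemma eC_add (x y : ℝ) : eC (x + y) = eC x * eC y := by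
  simp only [eC_eq_fourierChar, AddChar.map_add_eq_mul, Circle.coe_mul]

lemma conj_eC (x : ℝ) : conj (eC x) = eC (-x) := by
  simp only [eC_eq_fourierChar, AddChar.map_neg_eq_inv, Circle.coe_inv_eq_conj]

lemma norm_eC (x : ℝ) : ‖eC x‖ = 1 := by
  rw [eC_eq_fourierChar, Circle.norm_coe]

lemma eC_intCast (k : ℤ) : eC k = 1 := by
  rw [eC, Complex.exp_eq_one_iff]
  exact ⟨k, by push_cast; ring⟩

lemma eC_re (x : ℝ) : (eC x).re = Real.cos (2 * Real.pi * x) := by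
  rw [eC_eq_fourierChar, Real.fourierChar_apply, Complex.exp_ofReal_mul_I_re]

lemma eC_add_eC_neg (x : ℝ) : eC x + eC (-x) = 2 * (Real.cos (2 * Real.pi * x) : ℂ) := by
  rw [← conj_eC, Complex.add_conj, eC_re]
  push_cast
  rfl

lemma norm_eC_sub_le (x y : ℝ) : ‖eC x - eC y‖ ≤ 2 * Real.pi * |x - y| := by
  have hfactor : eC x - eC y = eC y * (eC (x - y) - 1) := by
    rw [mul_sub, ← eC_add, mul_one, add_sub_cancel]
  rw [hfactor, norm_mul, norm_eC, one_mul, eC_eq_fourierChar, Real.fourierChar_apply,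
    mul_comm _ Complex.I]
  refine Real.norm_exp_I_mul_ofReal_sub_one_le.trans_eq ?_
  rw [Real.norm_eq_abs, abs_mul, abs_of_pos (by positivity)]

lemma four_mul_abs_le_norm_eC_sub_one {x : ℝ} (hx : |x| ≤ 1 / 2) : 4 * |x| ≤ ‖eC x - 1‖ := by
  have hpi := Real.pi_pos
  have hsin := Real.mul_abs_le_abs_sin (x := Real.pi * x) (by
    rw [abs_mul, abs_of_pos hpi]
    nlinarith)
  have hjordan : 2 / Real.pi * |Real.pi * x| = 2 * |x| := by
    rw [abs_mul, abs_of_pos hpi]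
    field_simp
  rw [eC_eq_fourierChar, Real.fourierChar_apply, mul_comm _ Complex.I,
    Complex.norm_exp_I_mul_ofReal_sub_one, show 2 * Real.pi * x / 2 = Real.pi * x by ring,
    norm_mul, Real.norm_eq_abs, Real.norm_eq_abs, abs_two]
  linarith

lemma norm_sum_eC_le {ι : Type*} (s : Finset ι) (f : ι → ℝ) : ‖∑ i ∈ s, eC (f i)‖ ≤ #s := by
  refine (norm_sum_le _ _).trans_eq ?_
  simp only [norm_eC, sum_const, nsmul_eq_mul, mul_one]

/-! ### Weyl's inequality for polynomial phases -/

lemma norm_sum_eC_le_of_fwdDiff_eq {β : ℝ} {f : ℕ → ℝ} (hf : ∀ n, Δ_[1] f n = β) (h0 : β ≠ 0)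
    (hβ : |β| ≤ 1 / 2) (M : ℕ) : ‖∑ n ∈ range M, eC (f n)‖ ≤ 1 / (2 * |β|) := by
  have hstep (n : ℕ) : eC (f (n + 1)) = eC (f n) * eC β := by
    rw [← eC_add, ← hf n, fwdDiff, add_sub_cancel]
  have htelescope : (∑ n ∈ range M, eC (f n)) * (eC β - 1) = eC (f M) - eC (f 0) := by
    rw [← sum_range_sub (fun n => eC (f n)), sum_mul]
    exact sum_congr rfl fun n _ => by rw [hstep]; ring
  have hmul : ‖∑ n ∈ range M, eC (f n)‖ * ‖eC β - 1‖ ≤ 2 := by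
    rw [← norm_mul, htelescope]
    refine (norm_sub_le _ _).trans ?_
    rw [norm_eC, norm_eC, one_add_one_eq_two]
  have hden := four_mul_abs_le_norm_eC_sub_one hβ
  have hβ0 : 0 < |β| := abs_pos.mpr h0
  rw [le_div_iff₀ (by positivity)]
  nlinarith [norm_nonneg (∑ n ∈ range M, eC (f n))]

lemma fwdDiff_iter_fwdDiff_eq {d : ℕ} {β : ℝ} {f : ℕ → ℝ}
    (hf : ∀ n, Δ_[1] ^[d + 1] f n = β) (h n : ℕ) : Δ_[1] ^[d] (Δ_[h] f) n = h * β := by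
  have htelescope : Δ_[h] f = ∑ k ∈ range h, fun n => Δ_[1] f (n + k) := by
    ext n
    rw [Finset.sum_apply, fwdDiff, ← add_zero n, add_assoc, zero_add,
      ← sum_range_sub (fun k => f (n + k))]
    rfl
  rw [htelescope, fwdDiff_iter_finsetSum, Finset.sum_apply]
  simp only [fwdDiff_iter_comp_add, ← Function.iterate_succ_apply, hf, sum_const, card_range,
    nsmul_eq_mul]

lemma sum_correlations_succ (z : ℕ → ℂ) (M : ℕ) :
    ∑ h ∈ Ico 1 (M + 1), ∑ n ∈ range (M + 1 - h), z (n + h) * conj (z n) =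
      ∑ h ∈ Ico 1 M, ∑ n ∈ range (M - h), z (n + h) * conj (z n) +
        ∑ n ∈ range M, z M * conj (z n) := by
  have hlast : ∀ h ∈ Ico 1 (M + 1), ∑ n ∈ range (M + 1 - h), z (n + h) * conj (z n) =
      ∑ n ∈ range (M - h), z (n + h) * conj (z n) + z M * conj (z (M - h)) := by
    intro h hh
    rw [mem_Ico] at hh
    rw [show M + 1 - h = (M - h) + 1 by omega, sum_range_succ, show M - h + h = M by omega]
  rw [sum_congr rfl hlast, sum_add_distrib]
  congr 1
  · rcases Nat.eq_zero_or_pos M with rfl | hM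
    · simp
    · simp [sum_Ico_succ_top hM]
  · rw [← sum_range_reflect (fun n => z M * conj (z n)), sum_Ico_eq_sum_range, Nat.add_sub_cancel]
    exact sum_congr rfl fun n _ => by rw [Nat.sub_sub]

lemma sum_mul_conj_sum_eq (z : ℕ → ℂ) (M : ℕ) :
    (∑ n ∈ range M, z n) * conj (∑ n ∈ range M, z n) = ∑ n ∈ range M, z n * conj (z n) +
      (∑ h ∈ Ico 1 M, ∑ n ∈ range (M - h), z (n + h) * conj (z n) +
        conj (∑ h ∈ Ico 1 M, ∑ n ∈ range (M - h), z (n + h) * conj (z n))) := by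
  induction M with
  | zero => simp
  | succ M ih =>
    have hlast : ∑ n ∈ range M, z M * conj (z n) = z M * conj (∑ n ∈ range M, z n) := by
      rw [map_sum, mul_sum]
    rw [sum_correlations_succ, sum_range_succ, sum_range_succ, hlast]
    simp only [map_add, map_mul, Complex.conj_conj] at ih ⊢
    linear_combination ih

lemma norm_sum_sq_le_sum_correlations (z : ℕ → ℂ) (M : ℕ) :
    ‖∑ n ∈ range M, z n‖ ^ 2 ≤ ∑ n ∈ range M, ‖z n‖ ^ 2 +
      2 * ∑ h ∈ Ico 1 M, ‖∑ n ∈ range (M - h), z (n + h) * conj (z n)‖ := by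
  have hdiag : ‖∑ n ∈ range M, z n * conj (z n)‖ ≤ ∑ n ∈ range M, ‖z n‖ ^ 2 :=
    (norm_sum_le _ _).trans_eq <| sum_congr rfl fun n _ => by rw [norm_mul, RCLike.norm_conj, sq]
  calc ‖∑ n ∈ range M, z n‖ ^ 2
      = ‖(∑ n ∈ range M, z n) * conj (∑ n ∈ range M, z n)‖ := by
        rw [norm_mul, RCLike.norm_conj, sq]
    _ ≤ _ := by
        rw [sum_mul_conj_sum_eq]
        refine (norm_add_le _ _).trans (add_le_add hdiag ((norm_add_le _ _).trans ?_))
        rw [RCLike.norm_conj, ← two_mul]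
        gcongr
        exact norm_sum_le _ _

lemma card_filter_natCast_lt_le {s : Finset ℕ} (hs : 0 ∉ s) {K : ℝ} (hK : 0 ≤ K) :
    (#(s.filter fun h : ℕ => (h : ℝ) < K) : ℝ) ≤ K := by
  have hsub : (s.filter fun h : ℕ => (h : ℝ) < K) ⊆ Icc 1 ⌊K⌋₊ := by
    intro h hh
    rw [mem_filter] at hh
    exact mem_Icc.mpr ⟨Nat.one_le_iff_ne_zero.mpr (ne_of_mem_of_not_mem hh.1 hs),
      Nat.le_floor hh.2.le⟩
  have hcard := card_le_card hsub
  rw [Nat.card_Icc, Nat.add_sub_cancel] at hcard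
  exact (Nat.cast_le.mpr hcard).trans (Nat.floor_le hK)

/-- Weyl differencing, with the trivial bound for the shifts smaller than `K`. -/
lemma norm_sum_eC_sq_le_of_fwdDiff {f : ℕ → ℝ} {M L : ℕ} (hM : M ≤ L) {K V : ℝ} (hK : 0 ≤ K)
    (hV : 0 ≤ V)
    (h : ∀ h : ℕ, 1 ≤ h → h ≤ L → K ≤ h → ‖∑ n ∈ range (M - h), eC (Δ_[h] f n)‖ ≤ V) :
    ‖∑ n ∈ range M, eC (f n)‖ ^ 2 ≤ L + 2 * (L * V + K * L) := by
  have hML : (M : ℝ) ≤ L := mod_cast hM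
  have hcorr : ∀ h ∈ Ico 1 M, ‖∑ n ∈ range (M - h), eC (f (n + h)) * conj (eC (f n))‖ ≤
      V + if (h : ℝ) < K then (L : ℝ) else 0 := by
    intro k hk
    rw [mem_Ico] at hk
    have hdiff (n : ℕ) : eC (f (n + k)) * conj (eC (f n)) = eC (Δ_[k] f n) := by
      rw [conj_eC, ← eC_add, ← sub_eq_add_neg, fwdDiff]
    simp only [hdiff]
    split_ifs with hkK
    · have hcard : ((M - k : ℕ) : ℝ) ≤ L := mod_cast (Nat.sub_le M k).trans hM
      have htriv := norm_sum_eC_le (range (M - k)) (Δ_[k] f)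
      rw [card_range] at htriv
      linarith
    · rw [add_zero]
      exact h k hk.1 (hk.2.le.trans hM) (not_lt.mp hkK)
  have hsum : ∑ h ∈ Ico 1 M, ‖∑ n ∈ range (M - h), eC (f (n + h)) * conj (eC (f n))‖ ≤
      L * V + K * L := by
    refine (sum_le_sum hcorr).trans ?_
    rw [sum_add_distrib, ← sum_filter, sum_const, sum_const, Nat.card_Ico, nsmul_eq_mul,
      nsmul_eq_mul]
    have hcard : ((M - 1 : ℕ) : ℝ) ≤ L := mod_cast (Nat.sub_le M 1).trans hM
    gcongr
    exact card_filter_natCast_lt_le (by simp) hK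
  have hsq := norm_sum_sq_le_sum_correlations (fun n => eC (f n)) M
  simp only [norm_eC, one_pow, sum_const, card_range, nsmul_eq_mul, mul_one] at hsq
  linarith

/-- Weyl's inequality with constant `C` for polynomial phases of degree `d + 1`. The
coefficient is encoded by the constant top difference `β`, taken so small that it need not be
reduced modulo one. -/
def WeylBound (d : ℕ) (C : ℝ) : Prop :=
  ∀ (L : ℕ) (β : ℝ) (f : ℕ → ℝ), 1 ≤ L → (∀ n, Δ_[1] ^[d + 1] f n = β) →
    |β| * L ^ d ≤ 1 / 2 → 1 ≤ |β| * L ^ (d + 1) →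
    ∀ M ≤ L, ‖∑ n ∈ range M, eC (f n)‖ ≤ C * L * (|β| * L ^ (d + 1)) ^ (-(1 / 4 : ℝ) ^ d)

lemma weylBound_zero : WeylBound 0 1 := by
  intro L β f hL hf hβ hY M _
  have hL' : (1 : ℝ) ≤ L := mod_cast hL
  simp only [pow_zero, mul_one, zero_add, pow_one] at hβ hY ⊢
  have hβ0 : 0 < |β| := pos_of_mul_pos_left (zero_lt_one.trans_le hY) (Nat.cast_nonneg L)
  refine (norm_sum_eC_le_of_fwdDiff_eq hf (abs_pos.mp hβ0) hβ M).trans ?_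
  rw [Real.rpow_neg_one, one_mul, ← div_eq_mul_inv, div_le_div_iff₀ (by positivity)
    (by positivity)]
  nlinarith

namespace WeylBound

variable {d : ℕ} {C : ℝ}

lemma norm_sum_fwdDiff_le (hW : WeylBound d C) (hC : 0 ≤ C) {L : ℕ} {β : ℝ} {f : ℕ → ℝ}
    (hL : 1 ≤ L) (hf : ∀ n, Δ_[1] ^[d + 2] f n = β) (hβ : |β| * L ^ (d + 1) ≤ 1 / 2)
    (hY : 1 ≤ |β| * L ^ (d + 2)) {h M : ℕ} (hhL : h ≤ L) (hM : M ≤ L)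
    (hh : L * (|β| * L ^ (d + 2)) ^ (-(1 / 2) : ℝ) ≤ h) :
    ‖∑ n ∈ range M, eC (Δ_[h] f n)‖ ≤
      C * L * (|β| * L ^ (d + 2)) ^ (-((1 / 4 : ℝ) ^ d / 2)) := by
  have hL' : (1 : ℝ) ≤ L := mod_cast hL
  have hhL' : (h : ℝ) ≤ L := mod_cast hhL
  set Y := |β| * (L : ℝ) ^ (d + 2) with hYdef
  have hY0 : 0 < Y := by linarith
  have hsize : Y ^ (1 / 2 : ℝ) ≤ |h * β| * L ^ (d + 1) := by
    refine le_of_mul_le_mul_left ?_ (zero_lt_one.trans_le hL')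
    calc L * Y ^ (1 / 2 : ℝ) = L * Y ^ (-(1 / 2) : ℝ) * Y := by
          rw [mul_assoc, ← Real.rpow_add_one hY0.ne']; norm_num
      _ ≤ h * Y := by gcongr
      _ = L * (|h * β| * L ^ (d + 1)) := by rw [abs_mul, Nat.abs_cast, hYdef]; ring
  have hsmall : |h * β| * (L : ℝ) ^ d ≤ 1 / 2 := by
    rw [abs_mul, Nat.abs_cast]
    calc h * |β| * (L : ℝ) ^ d ≤ L * |β| * L ^ d := by gcongr
      _ = |β| * L ^ (d + 1) := by ring
      _ ≤ 1 / 2 := hβ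
  refine (hW L (h * β) _ hL (fwdDiff_iter_fwdDiff_eq hf h) hsmall
    ((Real.one_le_rpow hY (by norm_num)).trans hsize) M hM).trans ?_
  gcongr
  calc (|h * β| * L ^ (d + 1)) ^ (-(1 / 4 : ℝ) ^ d)
      ≤ (Y ^ (1 / 2 : ℝ)) ^ (-(1 / 4 : ℝ) ^ d) :=
        Real.rpow_le_rpow_of_nonpos (by positivity) hsize (neg_nonpos.mpr (by positivity))
    _ = Y ^ (-((1 / 4 : ℝ) ^ d / 2)) := by rw [← Real.rpow_mul hY0.le]; congr 1; ring

lemma succ (hW : WeylBound d C) (hC : 0 ≤ C) : WeylBound (d + 1) (3 + 2 * C) := by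
  intro L β f hL hf hβ hY M hM
  have hL' : (1 : ℝ) ≤ L := mod_cast hL
  have hcorr : ∀ h : ℕ, 1 ≤ h → h ≤ L → _ → ‖∑ n ∈ range (M - h), eC (Δ_[h] f n)‖ ≤ _ :=
    fun h _ hhL => hW.norm_sum_fwdDiff_le hC hL hf hβ hY hhL ((Nat.sub_le M h).trans hM)
  have hsq := norm_sum_eC_sq_le_of_fwdDiff hM (by positivity) (by positivity) hcorr
  have hYL : |β| * (L : ℝ) ^ (d + 2) ≤ L :=
    calc |β| * (L : ℝ) ^ (d + 2) = |β| * L ^ (d + 1) * L := by ring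
      _ ≤ 1 / 2 * L := by gcongr
      _ ≤ L := by linarith
  rw [add_assoc] at hY ⊢
  set Y := |β| * (L : ℝ) ^ (d + 2)
  have hY0 : 0 < Y := by linarith
  set V := Y ^ (-((1 / 4 : ℝ) ^ d / 2)) with hV
  have hη : (1 / 4 : ℝ) ^ d ≤ 1 := pow_le_one₀ (by norm_num) (by norm_num)
  have hhalf : Y ^ (-(1 / 2) : ℝ) ≤ V := Real.rpow_le_rpow_of_exponent_le hY (by linarith)
  have hone : 1 ≤ L * V :=
    calc (1 : ℝ) ≤ L * Y ^ (-1 : ℝ) := by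
          rwa [Real.rpow_neg_one, ← div_eq_mul_inv, one_le_div hY0]
      _ ≤ L * V := by
          gcongr
          exact Real.rpow_le_rpow_of_exponent_le hY (by linarith)
  have hVsq : V = (Y ^ (-(1 / 4 : ℝ) ^ (d + 1))) ^ 2 := by
    rw [hV, ← Real.rpow_mul_natCast hY0.le]
    congr 1
    push_cast
    ring
  refine (pow_le_pow_iff_left₀ (norm_nonneg _) (by positivity) two_ne_zero).mp ?_
  calc ‖∑ n ∈ range M, eC (f n)‖ ^ 2
      ≤ L * 1 + 2 * (L * (C * L * V) + L * Y ^ (-(1 / 2) : ℝ) * L) := by linarith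
    _ ≤ L * (L * V) + 2 * (L * (C * L * V) + L * V * L) := by gcongr
    _ = (3 + 2 * C) * (L * L * V) := by ring
    _ ≤ (3 + 2 * C) ^ 2 * (L * L * V) := by gcongr; nlinarith
    _ = _ := by rw [hVsq]; ring

end WeylBound

lemma exists_weylBound (d : ℕ) : ∃ C : ℝ, 1 ≤ C ∧ WeylBound d C := by
  induction d with
  | zero => exact ⟨1, le_rfl, weylBound_zero⟩
  | succ d ih =>
    obtain ⟨C, hC, hW⟩ := ih
    exact ⟨3 + 2 * C, by linarith, hW.succ (by linarith)⟩

/-! ### Weyl's inequality for smooth phases -/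

lemma fwdDiff_iter_comp_natCast (F : ℝ → ℝ) (d n : ℕ) :
    Δ_[1] ^[d] (fun k : ℕ => F k) n = Δ_[1] ^[d] F n := by
  simp [fwdDiff_iter_eq_sum_shift]

lemma fwdDiff_iter_sum_mul_pow_div_factorial (a : ℕ → ℝ) (d n : ℕ) :
    Δ_[1] ^[d] (fun k : ℕ => ∑ j ∈ range (d + 1), a j * (k : ℝ) ^ j / j.factorial) n = a d := by
  have hsum : (fun t : ℝ => ∑ j ∈ range (d + 1), a j * t ^ j / j.factorial) =
      ∑ j ∈ range (d + 1), (a j / j.factorial) • fun t : ℝ => t ^ j := by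
    ext t
    simp only [Finset.sum_apply, Pi.smul_apply, smul_eq_mul, div_mul_eq_mul_div]
  have hlower : ∀ j ∈ range d, Δ_[1] ^[d] ((a j / j.factorial) • fun t : ℝ => t ^ j) = 0 :=
    fun j hj => by
      rw [fwdDiff_iter_const_smul, fwdDiff_iter_pow_eq_zero_of_lt (mem_range.mp hj), smul_zero]
  rw [fwdDiff_iter_comp_natCast (fun t => ∑ j ∈ range (d + 1), a j * t ^ j / j.factorial), hsum,
    fwdDiff_iter_finsetSum, sum_range_succ, sum_eq_zero hlower, zero_add,
    fwdDiff_iter_const_smul, fwdDiff_iter_eq_factorial, Pi.smul_apply, smul_eq_mul]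
  exact div_mul_cancel₀ _ (Nat.cast_ne_zero.mpr d.factorial_ne_zero)

section DerivativeTower

variable {G : ℕ → ℝ → ℝ} {s : Set ℝ}

lemma iteratedDerivWithin_eqOn_of_hasDerivWithinAt (hs : UniqueDiffOn ℝ s)
    (hG : ∀ j, ∀ t ∈ s, HasDerivWithinAt (G j) (G (j + 1) t) s t) (j : ℕ) :
    Set.EqOn (iteratedDerivWithin j (G 0) s) (G j) s := by
  induction j with
  | zero => exact fun t _ => by rw [iteratedDerivWithin_zero]
  | succ j ih =>
    intro t ht
    rw [iteratedDerivWithin_succ, derivWithin_congr ih (ih ht)]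
    exact (hG j t ht).derivWithin (hs t ht)

lemma contDiffOn_of_hasDerivWithinAt (hs : UniqueDiffOn ℝ s)
    (hG : ∀ j, ∀ t ∈ s, HasDerivWithinAt (G j) (G (j + 1) t) s t) (n : ℕ) :
    ContDiffOn ℝ n (G 0) s := by
  refine contDiffOn_of_differentiableOn_deriv fun j _ => ?_
  have hdiff : DifferentiableOn ℝ (G j) s := fun t ht => (hG j t ht).differentiableWithinAt
  exact hdiff.congr (iteratedDerivWithin_eqOn_of_hasDerivWithinAt hs hG j)

lemma abs_sub_taylor_le {x H : ℝ} (hH : 0 < H)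
    (hG : ∀ j, ∀ t ∈ Set.Icc x (x + H), HasDerivWithinAt (G j) (G (j + 1) t) (Set.Icc x (x + H)) t)
    {d : ℕ} {B : ℝ} (hB : ∀ t ∈ Set.Icc x (x + H), |G (d + 1) t| ≤ B) {h : ℝ}
    (hh : h ∈ Set.Icc 0 H) :
    |G 0 (x + h) - ∑ j ∈ range (d + 1), G j x * h ^ j / j.factorial| ≤ B * h ^ (d + 1) := by
  have hs : UniqueDiffOn ℝ (Set.Icc x (x + H)) := uniqueDiffOn_Icc (by linarith)
  have hiter := iteratedDerivWithin_eqOn_of_hasDerivWithinAt hs hG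
  have hx : x ∈ Set.Icc x (x + H) := ⟨le_rfl, by linarith⟩
  have hB0 : 0 ≤ B := (abs_nonneg _).trans (hB x hx)
  have htaylor := taylor_mean_remainder_bound (x := x + h) (n := d) (C := B)
    (show x ≤ x + H by linarith) (mod_cast contDiffOn_of_hasDerivWithinAt hs hG (d + 1))
    ⟨by linarith [hh.1], by linarith [hh.2]⟩ fun t ht => by rw [hiter (d + 1) ht]; exact hB t ht
  have hpoly : taylorWithinEval (G 0) d (Set.Icc x (x + H)) x (x + h) =
      ∑ j ∈ range (d + 1), G j x * h ^ j / j.factorial := by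
    rw [taylor_within_apply]
    refine sum_congr rfl fun j _ => ?_
    rw [hiter j hx, add_sub_cancel_left, smul_eq_mul]
    ring
  rw [hpoly, add_sub_cancel_left, Real.norm_eq_abs] at htaylor
  refine htaylor.trans (div_le_self (mul_nonneg hB0 (pow_nonneg hh.1 _)) ?_)
  exact_mod_cast d.factorial_pos

lemma WeylBound.norm_sum_eC_smooth_le {d : ℕ} {W : ℝ} (hW : WeylBound d W) {x : ℝ} {L : ℕ}
    (hL : 1 ≤ L)
    (hG : ∀ j, ∀ t ∈ Set.Icc x (x + L), HasDerivWithinAt (G j) (G (j + 1) t) (Set.Icc x (x + L)) t)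
    (hsmall : |G (d + 1) x| * L ^ d ≤ 1 / 2) (hlarge : 1 ≤ |G (d + 1) x| * L ^ (d + 1)) {B : ℝ}
    (hB : ∀ t ∈ Set.Icc x (x + L), |G (d + 2) t| ≤ B) :
    ‖∑ n ∈ range L, eC (G 0 (x + n))‖ ≤
      W * L * (|G (d + 1) x| * L ^ (d + 1)) ^ (-(1 / 4 : ℝ) ^ d) +
        2 * Real.pi * (B * L ^ (d + 2)) * L := by
  have hL0 : (0 : ℝ) < L := mod_cast hL
  set P : ℕ → ℝ := fun n => ∑ j ∈ range (d + 1 + 1), G j x * (n : ℝ) ^ j / j.factorial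
  have hB0 : 0 ≤ B := (abs_nonneg _).trans (hB x ⟨le_rfl, by linarith⟩)
  have hpoly := hW L _ P hL (fwdDiff_iter_sum_mul_pow_div_factorial (fun j => G j x) (d + 1))
    hsmall hlarge L le_rfl
  have hterm : ∀ n ∈ range L,
      ‖eC (G 0 (x + n)) - eC (P n)‖ ≤ 2 * Real.pi * (B * L ^ (d + 2)) := by
    intro n hn
    have hnL : (n : ℝ) ≤ L := mod_cast (mem_range.mp hn).le
    have hpi := Real.pi_pos
    refine (norm_eC_sub_le _ _).trans ?_
    gcongr
    exact (abs_sub_taylor_le hL0 hG hB ⟨by positivity, hnL⟩).trans (by gcongr)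
  have herror : ‖∑ n ∈ range L, (eC (G 0 (x + n)) - eC (P n))‖ ≤
      2 * Real.pi * (B * L ^ (d + 2)) * L := by
    refine (norm_sum_le_of_le _ hterm).trans_eq ?_
    rw [sum_const, card_range, nsmul_eq_mul, mul_comm]
  calc ‖∑ n ∈ range L, eC (G 0 (x + n))‖
      = ‖∑ n ∈ range L, eC (P n) + ∑ n ∈ range L, (eC (G 0 (x + n)) - eC (P n))‖ := by
        rw [← sum_add_distrib]; simp only [add_sub_cancel]
    _ ≤ _ := (norm_add_le _ _).trans (add_le_add hpoly herror)

end DerivativeTower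

/-! ### Sums of powers and their derivatives -/

lemma exists_pos_forall_le {α : Type*} [Finite α] {f : α → ℝ} (hf : ∀ a, 0 < f a) :
    ∃ δ : ℝ, 0 < δ ∧ ∀ a, δ ≤ f a := by
  obtain ⟨⟨δ, hδ⟩, h⟩ := Finite.exists_ge fun a => (⟨f a, hf a⟩ : Set.Ioi (0 : ℝ))
  exact ⟨δ, hδ, h⟩

lemma exists_pos_forall_ge {α : Type*} [Finite α] (f : α → ℝ) :
    ∃ C : ℝ, 0 < C ∧ ∀ a, f a ≤ C := by
  obtain ⟨C, hC⟩ := Finite.exists_le f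
  exact ⟨max C 1, lt_max_of_lt_right one_pos, fun a => (hC a).trans (le_max_left _ _)⟩

section Phase

variable {ι : Type*} [Fintype ι] {c : ι → ℝ}

/-- The phase `∑ i, θ i * t ^ c i` whose exponential sums are estimated. -/
def phase (c θ : ι → ℝ) (t : ℝ) : ℝ := ∑ i, θ i * t ^ c i

/-- The `j`-th derivative of `phase c θ` on the positive reals. -/
def phaseDeriv (c θ : ι → ℝ) (j : ℕ) (t : ℝ) : ℝ :=
  ∑ i, θ i * ((descPochhammer ℝ j).eval (c i) * t ^ (c i - j))

/-- The size `∑ i, |θ i| * x ^ c i` of the phase at the scale `x`: the bound for `phase c θ x` that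
ignores cancellation between the terms. -/
def phaseSize (c θ : ι → ℝ) (x : ℝ) : ℝ := ∑ i, |θ i| * x ^ c i

lemma phaseSize_nonneg (c θ : ι → ℝ) {x : ℝ} (hx : 0 ≤ x) : 0 ≤ phaseSize c θ x :=
  sum_nonneg fun _ _ => by positivity

lemma phaseSize_mono (hpos : ∀ i, 0 < c i) (θ : ι → ℝ) {x y : ℝ} (hx : 0 ≤ x) (hxy : x ≤ y) :
    phaseSize c θ x ≤ phaseSize c θ y :=
  sum_le_sum fun i _ =>
    mul_le_mul_of_nonneg_left (Real.rpow_le_rpow hx hxy (hpos i).le) (abs_nonneg _)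

lemma rpow_mul_phaseSize_le_of_exponents_le {b : ℝ} (hb : ∀ i, c i ≤ b) (θ : ι → ℝ) {x y : ℝ}
    (hx : 0 < x) (hxy : x ≤ y) : (x / y) ^ b * phaseSize c θ y ≤ phaseSize c θ x := by
  have hy : 0 < y := hx.trans_le hxy
  rw [phaseSize, phaseSize, mul_sum]
  refine sum_le_sum fun i _ => ?_
  calc (x / y) ^ b * (|θ i| * y ^ c i) ≤ (x / y) ^ c i * (|θ i| * y ^ c i) := by
        have := Real.rpow_le_rpow_of_exponent_ge (div_pos hx hy) ((div_le_one hy).mpr hxy) (hb i)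
        gcongr
    _ = |θ i| * ((x / y) ^ c i * y ^ c i) := by ring
    _ = |θ i| * x ^ c i := by rw [← Real.mul_rpow (by positivity) hy.le, div_mul_cancel₀ _ hy.ne']

lemma rpow_mul_phaseSize_le_of_le_exponents {a : ℝ} (ha : ∀ i, a ≤ c i) (θ : ι → ℝ) {x y : ℝ}
    (hx : 0 < x) (hxy : x ≤ y) : (y / x) ^ a * phaseSize c θ x ≤ phaseSize c θ y := by
  have hy : 0 < y := hx.trans_le hxy
  rw [phaseSize, phaseSize, mul_sum]
  refine sum_le_sum fun i _ => ?_
  calc (y / x) ^ a * (|θ i| * x ^ c i) ≤ (y / x) ^ c i * (|θ i| * x ^ c i) := by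
        have := Real.rpow_le_rpow_of_exponent_le ((one_le_div hx).mpr hxy) (ha i)
        gcongr
    _ = |θ i| * ((y / x) ^ c i * x ^ c i) := by ring
    _ = |θ i| * y ^ c i := by rw [← Real.mul_rpow (by positivity) hx.le, div_mul_cancel₀ _ hx.ne']

lemma phaseDeriv_zero (c θ : ι → ℝ) : phaseDeriv c θ 0 = phase c θ := by
  ext t
  simp [phaseDeriv, phase]

lemma hasDerivAt_phaseDeriv (c θ : ι → ℝ) (j : ℕ) {t : ℝ} (ht : 0 < t) :
    HasDerivAt (phaseDeriv c θ j) (phaseDeriv c θ (j + 1) t) t := by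
  refine HasDerivAt.fun_sum fun i _ => ?_
  have hterm := ((Real.hasDerivAt_rpow_const (x := t) (p := c i - j) (Or.inl ht.ne')).const_mul
    ((descPochhammer ℝ j).eval (c i))).const_mul (θ i)
  refine hterm.congr_deriv ?_
  rw [descPochhammer_succ_eval, Nat.cast_add_one, ← sub_sub]
  ring

lemma exists_abs_phaseDeriv_le (hpos : ∀ i, 0 < c i) (j : ℕ) :
    ∃ C : ℝ, 0 < C ∧ ∀ (θ : ι → ℝ) (x t : ℝ), 0 < x → t ∈ Set.Icc x (2 * x) →
      |phaseDeriv c θ j t| ≤ C * phaseSize c θ x / x ^ j := by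
  obtain ⟨C, hC, hle⟩ := exists_pos_forall_ge fun i => |(descPochhammer ℝ j).eval (c i)| * 2 ^ c i
  refine ⟨C, hC, fun θ x t hx ht => (abs_sum_le_sum_abs _ _).trans ?_⟩
  have ht0 : 0 < t := hx.trans_le ht.1
  rw [phaseSize, mul_sum, sum_div]
  refine sum_le_sum fun i _ => ?_
  have hpow : t ^ (c i - j) ≤ 2 ^ c i * x ^ c i / x ^ j := by
    rw [Real.rpow_sub_natCast ht0.ne', ← Real.mul_rpow zero_le_two hx.le]
    gcongr
    exacts [(hpos i).le, ht.2, ht.1]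
  calc |θ i * ((descPochhammer ℝ j).eval (c i) * t ^ (c i - j))|
      = |θ i| * (|(descPochhammer ℝ j).eval (c i)| * t ^ (c i - j)) := by
        rw [abs_mul, abs_mul, abs_of_pos (Real.rpow_pos_of_pos ht0 _)]
    _ ≤ |θ i| * (|(descPochhammer ℝ j).eval (c i)| * (2 ^ c i * x ^ c i / x ^ j)) := by gcongr
    _ = |(descPochhammer ℝ j).eval (c i)| * 2 ^ c i * (|θ i| * x ^ c i / x ^ j) := by ring
    _ ≤ C * (|θ i| * x ^ c i / x ^ j) := by gcongr; exact hle i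
    _ = C * (|θ i| * x ^ c i) / x ^ j := by ring

lemma exists_le_abs_sum_mul_descPochhammer_fin {m : ℕ} [NeZero m] {y : Fin m → ℝ}
    (hy : Function.Injective y) :
    ∃ κ : ℝ, 0 < κ ∧ ∀ b : Fin m → ℝ, ∃ j : Fin m,
      κ * ∑ i, |b i| ≤ |∑ i, b i * (descPochhammer ℝ j).eval (y i)| := by
  set M : Matrix (Fin m) (Fin m) ℝ :=
    Matrix.of fun i j => (descPochhammer ℝ (j : ℕ)).eval (y i) with hM
  have hdet : M.det ≠ 0 := by
    rw [hM, ← Matrix.det_eval_matrixOfPolynomials_eq_det_vandermonde y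
      (fun j => descPochhammer ℝ (j : ℕ)) (fun j => descPochhammer_natDegree ℝ j)
      (fun j => monic_descPochhammer ℝ j)]
    exact Matrix.det_vandermonde_ne_zero_iff.mpr hy
  have hker : LinearMap.ker M.vecMulLinear = ⊥ :=
    LinearMap.ker_eq_bot'.mpr fun _ hb => Matrix.eq_zero_of_vecMul_eq_zero hdet hb
  obtain ⟨K, hK, hanti⟩ := M.vecMulLinear.exists_antilipschitzWith hker
  have hK' : (0 : ℝ) < K := hK
  have hm : (0 : ℝ) < m := mod_cast NeZero.pos m
  refine ⟨1 / (m * K), by positivity, fun b => ?_⟩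
  obtain ⟨j, hj⟩ := Finite.exists_max fun j => ‖Matrix.vecMul b M j‖
  have hentry : Matrix.vecMul b M j = ∑ i, b i * (descPochhammer ℝ j).eval (y i) := by
    simp [Matrix.vecMul, dotProduct, hM]
  refine ⟨j, ?_⟩
  rw [← hentry, ← Real.norm_eq_abs, one_div, inv_mul_le_iff₀ (by positivity)]
  calc ∑ i, |b i| ≤ ∑ _i : Fin m, ‖b‖ := sum_le_sum fun i _ => norm_le_pi_norm b i
    _ = m * ‖b‖ := by simp
    _ ≤ m * (K * ‖Matrix.vecMul b M‖) := by gcongr; exact hanti.le_mul_norm (map_zero _) b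
    _ ≤ m * (K * ‖Matrix.vecMul b M j‖) := by
        gcongr; exact (pi_norm_le_iff_of_nonneg (norm_nonneg _)).mpr hj
    _ = _ := by ring

lemma exists_le_abs_sum_mul_descPochhammer [Nonempty ι] {y : ι → ℝ} (hy : Function.Injective y) :
    ∃ κ : ℝ, 0 < κ ∧ ∀ b : ι → ℝ, ∃ j < Fintype.card ι,
      κ * ∑ i, |b i| ≤ |∑ i, b i * (descPochhammer ℝ j).eval (y i)| := by
  obtain ⟨κ, hκ, h⟩ := exists_le_abs_sum_mul_descPochhammer_fin
    (hy.comp (Fintype.equivFin ι).symm.injective)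
  refine ⟨κ, hκ, fun b => ?_⟩
  obtain ⟨j, hj⟩ := h (b ∘ (Fintype.equivFin ι).symm)
  refine ⟨j, j.2, ?_⟩
  simpa only [Function.comp_apply, Equiv.sum_comp (Fintype.equivFin ι).symm fun i => |b i|,
    Equiv.sum_comp (Fintype.equivFin ι).symm
      fun i => b i * (descPochhammer ℝ j).eval (y i)] using hj

lemma descPochhammer_eval_ne_zero {y : ℝ} (hy : ∀ k : ℕ, y ≠ k) (d : ℕ) :
    (descPochhammer ℝ d).eval y ≠ 0 := by
  rw [descPochhammer_eval_eq_prod_range, prod_ne_zero_iff]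
  exact fun k _ => sub_ne_zero.mpr (hy k)

lemma phaseDeriv_add_eq (c θ : ι → ℝ) (d j : ℕ) {x : ℝ} (hx : 0 < x) :
    phaseDeriv c θ (d + j) x = (∑ i, θ i * (descPochhammer ℝ d).eval (c i) * x ^ c i *
      (descPochhammer ℝ j).eval (c i - d)) / x ^ (d + j) := by
  rw [phaseDeriv, sum_div]
  refine sum_congr rfl fun i _ => ?_
  rw [← descPochhammer_mul, Polynomial.eval_mul, Polynomial.eval_comp, Polynomial.eval_sub,
    Polynomial.eval_X, Polynomial.eval_natCast, Real.rpow_sub_natCast hx.ne']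
  ring

/-- Up to the factor `x ^ (-(d + j))`, the derivatives of order `d + j` are obtained from the terms
of the phase by an invertible matrix of Vandermonde type, so they are not all small. -/
lemma exists_le_abs_phaseDeriv [Nonempty ι] (hinj : Function.Injective c)
    (hint : ∀ i, ∀ k : ℕ, c i ≠ k) (d : ℕ) :
    ∃ κ : ℝ, 0 < κ ∧ ∀ (θ : ι → ℝ) (x : ℝ), 0 < x → ∃ j < Fintype.card ι,
      κ * phaseSize c θ x / x ^ (d + j) ≤ |phaseDeriv c θ (d + j) x| := by
  obtain ⟨κ, hκ, h⟩ := exists_le_abs_sum_mul_descPochhammer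
    (y := fun i => c i - d) (fun i j hij => hinj (sub_left_injective hij))
  obtain ⟨μ, hμ, hle⟩ := exists_pos_forall_le
    fun i => abs_pos.mpr (descPochhammer_eval_ne_zero (hint i) d)
  refine ⟨κ * μ, by positivity, fun θ x hx => ?_⟩
  obtain ⟨j, hj, hsum⟩ := h fun i => θ i * (descPochhammer ℝ d).eval (c i) * x ^ c i
  refine ⟨j, hj, ?_⟩
  rw [phaseDeriv_add_eq c θ d j hx, abs_div, abs_of_pos (pow_pos hx (d + j))]
  gcongr
  refine le_trans ?_ hsum
  rw [mul_assoc, phaseSize, mul_sum]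
  gcongr with i
  rw [abs_mul, abs_mul, abs_of_pos (Real.rpow_pos_of_pos hx _), mul_right_comm, mul_comm]
  gcongr
  exact hle i

end Phase

/-! ### Exponential sums over sums of powers -/

/-- Some block of at most `B` consecutive integers starting at `x` carries a mean of `f` of modulus
at most `D`. Intervals will be tiled by such blocks. -/
def HasSmallBlock (f : ℕ → ℂ) (x : ℕ) (B D : ℝ) : Prop :=
  ∃ L : ℕ, 1 ≤ L ∧ L ≤ B ∧ ‖∑ n ∈ range L, f (x + n)‖ ≤ D * L

namespace HasSmallBlock

variable {f : ℕ → ℂ} {x : ℕ} {B B' D D' : ℝ}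

lemma mono (h : HasSmallBlock f x B D) (hB : B ≤ B') (hD : D ≤ D') : HasSmallBlock f x B' D' := by
  obtain ⟨L, hL, hLB, hLD⟩ := h
  exact ⟨L, hL, hLB.trans hB, hLD.trans (by gcongr)⟩

lemma of_one_le (hf : ‖f x‖ ≤ 1) (hB : 1 ≤ B) (hD : 1 ≤ D) : HasSmallBlock f x B D :=
  ⟨1, le_rfl, mod_cast hB, by simpa using hf.trans hD⟩

end HasSmallBlock

lemma norm_sum_Ico_le_of_hasSmallBlock {f : ℕ → ℂ} (hf : ∀ n, ‖f n‖ ≤ 1) {x N : ℕ} {B D : ℝ}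
    (hB : 0 ≤ B) (hD : 0 ≤ D) (h : ∀ y, x ≤ y → y < N → HasSmallBlock f y B D) :
    ‖∑ n ∈ Ico x N, f n‖ ≤ D * (N - x : ℕ) + B := by
  obtain ⟨r, hr⟩ : ∃ r, r = N - x := ⟨_, rfl⟩
  induction r using Nat.strong_induction_on generalizing x with
  | _ r ih =>
    rcases le_or_gt N x with hNx | hxN
    · rw [Ico_eq_empty_of_le hNx, sum_empty, norm_zero]
      positivity
    obtain ⟨L, hL, hLB, hLD⟩ := h x le_rfl hxN
    rcases lt_or_ge N (x + L) with hover | hin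
    · calc ‖∑ n ∈ Ico x N, f n‖ ≤ ∑ _n ∈ Ico x N, (1 : ℝ) := norm_sum_le_of_le _ fun n _ => hf n
        _ = (N - x : ℕ) := by simp
        _ ≤ L := mod_cast (by omega : N - x ≤ L)
        _ ≤ B := hLB
        _ ≤ _ := le_add_of_nonneg_left (by positivity)
    · have hrest := ih (N - (x + L)) (by omega) (x := x + L) (fun y hy => h y (by omega)) rfl
      have hblock : ∑ n ∈ Ico x (x + L), f n = ∑ n ∈ range L, f (x + n) := by
        rw [sum_Ico_eq_sum_range, Nat.add_sub_cancel_left]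
      have hcard : ((N - x : ℕ) : ℝ) = L + (N - (x + L) : ℕ) :=
        mod_cast (by omega : N - x = L + (N - (x + L)))
      rw [← sum_Ico_consecutive f (Nat.le_add_right x L) hin, hblock, hcard]
      refine (norm_add_le _ _).trans ?_
      linarith

lemma norm_sum_Icc_le_of_hasSmallBlock {f : ℕ → ℂ} (hf : ∀ n, ‖f n‖ ≤ 1) {N : ℕ} {B D Z : ℝ}
    (hB : 0 ≤ B) (hD : 0 ≤ D) (hN : 1 ≤ N) (hZ : 1 ≤ Z)
    (h : ∀ x : ℕ, N / Z ≤ x → x ≤ N → HasSmallBlock f x B D) :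
    ‖∑ n ∈ Icc 1 N, f n‖ ≤ N / Z + D * N + B := by
  have hM : 0 < N / Z := by positivity
  set M : ℕ := ⌈N / Z⌉₊
  have hM1 : 1 ≤ M := Nat.ceil_pos.mpr hM
  have hMN : M ≤ N := Nat.ceil_le.mpr (div_le_self N.cast_nonneg hZ)
  have hhead : ‖∑ n ∈ Ico 1 M, f n‖ ≤ N / Z :=
    calc ‖∑ n ∈ Ico 1 M, f n‖ ≤ ∑ _n ∈ Ico 1 M, (1 : ℝ) := norm_sum_le_of_le _ fun n _ => hf n
      _ = (M : ℝ) - 1 := by simp [Nat.cast_sub hM1]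
      _ ≤ N / Z := by linarith [Nat.ceil_lt_add_one hM.le]
  have htail : ‖∑ n ∈ Ico M (N + 1), f n‖ ≤ D * (N + 1 - M : ℕ) + B :=
    norm_sum_Ico_le_of_hasSmallBlock hf hB hD fun x hMx hxN =>
      h x ((Nat.le_ceil _).trans (mod_cast hMx)) (Nat.lt_succ_iff.mp hxN)
  have hcard : ((N + 1 - M : ℕ) : ℝ) ≤ N := mod_cast (by omega : N + 1 - M ≤ N)
  have hsplit : ∑ n ∈ Icc 1 N, f n = ∑ n ∈ Ico 1 M, f n + ∑ n ∈ Ico M (N + 1), f n :=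
    (sum_Ico_consecutive _ hM1 (by omega)).symm
  calc ‖∑ n ∈ Icc 1 N, f n‖ ≤ N / Z + (D * (N + 1 - M : ℕ) + B) :=
        hsplit ▸ (norm_add_le _ _).trans (add_le_add hhead htail)
    _ ≤ N / Z + (D * N + B) := by gcongr
    _ = N / Z + D * N + B := by ring

lemma half_le_natFloor {r : ℝ} (hr : 1 ≤ r) : r / 2 ≤ ⌊r⌋₊ := by
  have hfloor : (1 : ℝ) ≤ ⌊r⌋₊ := mod_cast (Nat.one_le_floor_iff r).mpr hr
  linarith [Nat.lt_floor_add_one r]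

/-- A block of length `x / ω ^ 2` is short enough for the Taylor error to be `O(ω⁻¹)` and long
enough for Weyl's inequality to gain a power of `ω`. -/
lemma WeylBound.norm_sum_eC_block_le {d : ℕ} {W : ℝ} (hW : WeylBound d W) (hW0 : 0 ≤ W)
    {G : ℕ → ℝ → ℝ} {x L : ℕ} {ω κ C : ℝ} (hκ : 0 < κ) (hC : 0 ≤ C) (hω1 : 1 ≤ ω)
    (hωC : 2 * C ≤ ω) (hωκ : 2 ^ (d + 1) / κ ≤ ω) (hωx : ω ^ 4 ≤ x) (hL1 : 1 ≤ L)
    (hL : L ≤ x / ω ^ 2) (hL' : x / ω ^ 2 / 2 ≤ L)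
    (hG : ∀ j, ∀ t : ℝ, 0 < t → HasDerivAt (G j) (G (j + 1) t) t)
    (hlow : κ * ω ^ (2 * d + 3) / x ^ (d + 1) ≤ |G (d + 1) x|)
    (hup : |G (d + 1) x| ≤ C * ω ^ (2 * d + 3) / x ^ (d + 1))
    (hnext : ∀ t ∈ Set.Icc (x : ℝ) (2 * x), |G (d + 2) t| ≤ C * ω ^ (2 * d + 3) / x ^ (d + 2)) :
    ‖∑ n ∈ range L, eC (G 0 (x + n))‖ ≤
      (W * (κ / 2 ^ (d + 1) * ω) ^ (-(1 / 4 : ℝ) ^ d) + 2 * Real.pi * (C / ω)) * L := by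
  have hω0 : 0 < ω := by linarith
  have hx0 : (0 : ℝ) < x := (by positivity : 0 < ω ^ 4).trans_le hωx
  have hLx : (L : ℝ) ≤ x := hL.trans (div_le_self hx0.le (one_le_pow₀ hω1))
  have hsmall : |G (d + 1) x| * L ^ d ≤ 1 / 2 :=
    calc |G (d + 1) x| * L ^ d ≤ C * ω ^ (2 * d + 3) / x ^ (d + 1) * (x / ω ^ 2) ^ d := by gcongr
      _ = C * ω ^ 3 / x := by rw [div_pow, ← pow_mul]; field_simp; ring
      _ ≤ (ω / 2) * ω ^ 3 / ω ^ 4 := by gcongr; linarith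
      _ = 1 / 2 := by field_simp
  have hlarge : κ / 2 ^ (d + 1) * ω ≤ |G (d + 1) x| * L ^ (d + 1) :=
    calc κ / 2 ^ (d + 1) * ω
        = κ * ω ^ (2 * d + 3) / x ^ (d + 1) * (x / ω ^ 2 / 2) ^ (d + 1) := by
          rw [div_pow, div_pow, ← pow_mul]; field_simp; ring
      _ ≤ |G (d + 1) x| * L ^ (d + 1) := by gcongr
  have hone : 1 ≤ κ / 2 ^ (d + 1) * ω := by
    rwa [div_le_iff₀ hκ, ← one_le_div (by positivity), mul_comm, mul_div_right_comm] at hωκ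
  have hsum := hW.norm_sum_eC_smooth_le hL1
    (fun j t ht => (hG j t (hx0.trans_le ht.1)).hasDerivWithinAt) hsmall (hone.trans hlarge)
    (fun t ht => hnext t ⟨ht.1, by linarith [ht.2]⟩)
  have herror : C * ω ^ (2 * d + 3) / x ^ (d + 2) * (L : ℝ) ^ (d + 2) ≤ C / ω :=
    calc C * ω ^ (2 * d + 3) / x ^ (d + 2) * (L : ℝ) ^ (d + 2)
        ≤ C * ω ^ (2 * d + 3) / x ^ (d + 2) * (x / ω ^ 2) ^ (d + 2) := by gcongr
      _ = C / ω := by rw [div_pow, ← pow_mul]; field_simp; ring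
  have hsaving := Real.rpow_le_rpow_of_nonpos (by positivity) hlarge
    (neg_nonpos.mpr (by positivity : (0 : ℝ) ≤ (1 / 4) ^ d))
  have hpi := Real.pi_pos
  exact hsum.trans ((by gcongr : _ ≤ W * L * (κ / 2 ^ (d + 1) * ω) ^ (-(1 / 4 : ℝ) ^ d) +
    2 * Real.pi * (C / ω) * L).trans_eq (by ring))

lemma WeylBound.hasSmallBlock {d : ℕ} {W : ℝ} (hW : WeylBound d W) (hW0 : 0 ≤ W)
    {G : ℕ → ℝ → ℝ} {x : ℕ} {ω κ C : ℝ} (hκ : 0 < κ) (hC : 0 ≤ C) (hω1 : 1 ≤ ω)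
    (hωC : 2 * C ≤ ω) (hωκ : 2 ^ (d + 1) / κ ≤ ω) (hωx : ω ^ 4 ≤ x)
    (hG : ∀ j, ∀ t : ℝ, 0 < t → HasDerivAt (G j) (G (j + 1) t) t)
    (hlow : κ * ω ^ (2 * d + 3) / x ^ (d + 1) ≤ |G (d + 1) x|)
    (hup : |G (d + 1) x| ≤ C * ω ^ (2 * d + 3) / x ^ (d + 1))
    (hnext : ∀ t ∈ Set.Icc (x : ℝ) (2 * x), |G (d + 2) t| ≤ C * ω ^ (2 * d + 3) / x ^ (d + 2)) :
    HasSmallBlock (fun n => eC (G 0 n)) x (x * ω ^ (-(1 / 4 : ℝ) ^ d))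
      ((W * (κ / 2 ^ (d + 1)) ^ (-(1 / 4 : ℝ) ^ d) + 2 * Real.pi * C) *
        ω ^ (-(1 / 4 : ℝ) ^ d)) := by
  have hω0 : 0 < ω := by linarith
  have hx0 : (0 : ℝ) < x := (by positivity : 0 < ω ^ 4).trans_le hωx
  have hr1 : 1 ≤ x / ω ^ 2 := by
    rw [one_le_div (by positivity)]
    exact (pow_le_pow_right₀ hω1 (by norm_num)).trans hωx
  have hL1 : 1 ≤ ⌊x / ω ^ 2⌋₊ := (Nat.one_le_floor_iff _).mpr hr1
  have hL : (⌊x / ω ^ 2⌋₊ : ℝ) ≤ x / ω ^ 2 := Nat.floor_le (by positivity)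
  have hblock := hW.norm_sum_eC_block_le hW0 hκ hC hω1 hωC hωκ hωx hL1 hL (half_le_natFloor hr1)
    hG hlow hup hnext
  have ha1 : (1 / 4 : ℝ) ^ d ≤ 1 := pow_le_one₀ (by norm_num) (by norm_num)
  set a : ℝ := (1 / 4) ^ d
  refine ⟨⌊x / ω ^ 2⌋₊, hL1, hL.trans ?_, ?_⟩
  · calc x / ω ^ 2 = x * ω ^ (-2 : ℝ) := by
          rw [Real.rpow_neg hω0.le, Real.rpow_two, div_eq_mul_inv]
      _ ≤ x * ω ^ (-a) := by gcongr; linarith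
  · have hpi := Real.pi_pos
    push_cast
    refine hblock.trans (mul_le_mul_of_nonneg_right ?_ (Nat.cast_nonneg _))
    calc W * (κ / 2 ^ (d + 1) * ω) ^ (-a) + 2 * Real.pi * (C / ω)
        = W * (κ / 2 ^ (d + 1)) ^ (-a) * ω ^ (-a) + 2 * Real.pi * C * ω ^ (-1 : ℝ) := by
          rw [Real.mul_rpow (by positivity) hω0.le, Real.rpow_neg_one]
          ring
      _ ≤ W * (κ / 2 ^ (d + 1)) ^ (-a) * ω ^ (-a) + 2 * Real.pi * C * ω ^ (-a) := by gcongr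
      _ = _ := by ring

lemma pow_rpow_one_div_le {x T k : ℝ} (hx : 1 ≤ x) (hT : 0 ≤ T) (hTk : T ≤ x ^ k) {p q : ℕ}
    (hp : 0 < p) (hqp : q * k ≤ p) : (T ^ (1 / p : ℝ)) ^ q ≤ x :=
  calc (T ^ (1 / p : ℝ)) ^ q = T ^ (q / p : ℝ) := by
        rw [← Real.rpow_mul_natCast hT, one_div_mul_eq_div]
    _ ≤ (x ^ k) ^ (q / p : ℝ) := by gcongr
    _ = x ^ (q * k / p) := by rw [← Real.rpow_mul (by positivity)]; congr 1; ring
    _ ≤ x ^ (1 : ℝ) :=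
        Real.rpow_le_rpow_of_exponent_le hx (div_le_one_of_le₀ hqp (by positivity))
    _ = x := Real.rpow_one _

section PhaseBlocks

variable {ι : Type*} [Fintype ι] {c : ι → ℝ}

lemma exists_hasSmallBlock_of_le_abs_phaseDeriv (hpos : ∀ i, 0 < c i) (d : ℕ) {κ : ℝ}
    (hκ : 0 < κ) :
    ∃ C : ℝ, ∀ (x : ℕ) (θ : ι → ℝ) (ω : ℝ), 1 ≤ ω → ω ^ 4 ≤ x →
      phaseSize c θ x = ω ^ (2 * d + 3) →
      κ * phaseSize c θ x / x ^ (d + 1) ≤ |phaseDeriv c θ (d + 1) x| →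
      HasSmallBlock (fun n => eC (phase c θ n)) x (C * x * ω ^ (-(1 / 4 : ℝ) ^ d))
        (C * ω ^ (-(1 / 4 : ℝ) ^ d)) := by
  obtain ⟨C₁, hC₁, hup⟩ := exists_abs_phaseDeriv_le hpos (d + 1)
  obtain ⟨C₂, hC₂, hnext⟩ := exists_abs_phaseDeriv_le hpos (d + 2)
  obtain ⟨W, hW1, hW⟩ := exists_weylBound d
  have hpi := Real.pi_pos
  have hW0 : 0 ≤ W := zero_le_one.trans hW1
  have ha1 : (1 / 4 : ℝ) ^ d ≤ 1 := pow_le_one₀ (by norm_num) (by norm_num)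
  set a : ℝ := (1 / 4) ^ d
  set ω₀ := max (2 * (C₁ + C₂)) (2 ^ (d + 1) / κ)
  have hω₀0 : 0 < ω₀ := lt_max_of_lt_left (by positivity)
  set D := W * (κ / 2 ^ (d + 1)) ^ (-a) + 2 * Real.pi * (C₁ + C₂)
  have hD0 : 0 < D := by positivity
  refine ⟨1 + ω₀ + D, fun x θ ω hω1 hωx hT hlow => ?_⟩
  have hω0 : 0 < ω := by linarith
  have hx1 : (1 : ℝ) ≤ x := (one_le_pow₀ hω1).trans hωx
  have hx0 : (0 : ℝ) < x := by linarith
  rcases lt_or_ge ω ω₀ with hlt | hge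
  · have hone : 1 ≤ (1 + ω₀ + D) * ω ^ (-a) :=
      calc 1 = ω * ω ^ (-1 : ℝ) := by rw [Real.rpow_neg_one, mul_inv_cancel₀ hω0.ne']
        _ ≤ (1 + ω₀ + D) * ω ^ (-a) := by gcongr; linarith
    refine .of_one_le (norm_eC _).le ?_ hone
    rw [mul_right_comm]
    exact one_le_mul_of_one_le_of_one_le hone hx1
  · rw [hT] at hlow
    have hblock : HasSmallBlock (fun n => eC (phase c θ n)) x (x * ω ^ (-a)) (D * ω ^ (-a)) := by
      rw [← phaseDeriv_zero]
      exact hW.hasSmallBlock hW0 hκ (by positivity) hω1 ((le_max_left _ _).trans hge)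
        ((le_max_right _ _).trans hge) hωx (fun j t ht => hasDerivAt_phaseDeriv c θ j ht) hlow
        ((hup θ x x hx0 ⟨le_rfl, by linarith⟩).trans (by rw [hT]; gcongr; linarith))
        (fun t ht => (hnext θ x t hx0 ht).trans (by rw [hT]; gcongr; linarith))
    refine hblock.mono ?_ (by gcongr; linarith)
    gcongr
    exact le_mul_of_one_le_left hx0.le (by linarith)

lemma exists_hasSmallBlock (hpos : ∀ i, 0 < c i) (hinj : Function.Injective c)
    (hint : ∀ i, ∀ k : ℕ, c i ≠ k) (k : ℝ) :
    ∃ C η : ℝ, 0 < C ∧ 0 < η ∧ ∀ (x : ℕ) (θ : ι → ℝ), 1 ≤ x → 1 ≤ phaseSize c θ x →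
      phaseSize c θ x ≤ (x : ℝ) ^ k →
      HasSmallBlock (fun n => eC (phase c θ n)) x (C * x * phaseSize c θ x ^ (-η))
        (C * phaseSize c θ x ^ (-η)) := by
  rcases isEmpty_or_nonempty ι with hι | hι
  · exact ⟨1, 1, one_pos, one_pos, fun x θ _ hT => by norm_num [phaseSize] at hT⟩
  obtain ⟨d, hd⟩ := exists_nat_ge (2 * k)
  obtain ⟨κ, hκ, hlow⟩ := exists_le_abs_phaseDeriv hinj hint (d + 1)
  choose C' hC' using fun j => exists_hasSmallBlock_of_le_abs_phaseDeriv hpos (d + j) hκ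
  obtain ⟨C, hC, hle⟩ := exists_pos_forall_ge fun j : Fin (Fintype.card ι) => C' j
  obtain ⟨η, hη, hge⟩ := exists_pos_forall_le
    (f := fun j : Fin (Fintype.card ι) => (1 / 4 : ℝ) ^ (d + j) / (2 * (d + j : ℕ) + 3 : ℕ))
    fun j => by positivity
  refine ⟨C, η, hC, hη, fun x θ hx hT hTk => ?_⟩
  have hx1 : (1 : ℝ) ≤ x := mod_cast hx
  obtain ⟨j, hj, hlow⟩ := hlow θ x (by linarith)
  set T := phaseSize c θ x with hTdef
  have hT0 : 0 ≤ T := by linarith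
  rw [add_right_comm] at hlow
  set p := 2 * (d + j) + 3 with hp
  have hp0 : (p : ℝ) ≠ 0 := by positivity
  set ω := T ^ (1 / p : ℝ) with hω
  have hωT : T = ω ^ p := by
    rw [hω, ← Real.rpow_mul_natCast hT0, one_div_mul_cancel hp0, Real.rpow_one]
  have hωx : ω ^ 4 ≤ x := pow_rpow_one_div_le hx1 hT0 hTk (by positivity) (by
    rw [hp]; push_cast; linarith [j.cast_nonneg (α := ℝ)])
  have hsaving : ω ^ (-(1 / 4 : ℝ) ^ (d + j)) ≤ T ^ (-η) := by
    rw [hω, ← Real.rpow_mul hT0]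
    refine Real.rpow_le_rpow_of_exponent_le hT ?_
    have := hge ⟨j, hj⟩
    rw [mul_neg, neg_le_neg_iff, one_div_mul_eq_div]
    exact this
  have hCj : C' j ≤ C := hle ⟨j, hj⟩
  exact (hC' j x θ ω (Real.one_le_rpow hT (by positivity)) hωx hωT hlow).mono (by gcongr)
    (by gcongr)

section Truncation

variable {b k s : ℝ} {θ : ι → ℝ} {N x : ℝ}

lemma sqrt_phaseSize_le (hb : ∀ i, c i ≤ b) (hb0 : 0 ≤ b) (hs : s * b ≤ 1 / 2) (hN : 0 < N)
    (hT : 1 ≤ phaseSize c θ N) (hx : N / phaseSize c θ N ^ s ≤ x) (hxN : x ≤ N) :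
    phaseSize c θ N ^ (1 / 2 : ℝ) ≤ phaseSize c θ x := by
  set T := phaseSize c θ N
  have hT0 : 0 < T := by linarith
  have hx0 : 0 < x := lt_of_lt_of_le (by positivity) hx
  have hratio : (T ^ s)⁻¹ ≤ x / N := by
    rwa [le_div_iff₀ hN, mul_comm, ← div_eq_mul_inv]
  calc T ^ (1 / 2 : ℝ) ≤ T ^ (-(s * b) + 1) := Real.rpow_le_rpow_of_exponent_le hT (by linarith)
    _ = (T ^ s)⁻¹ ^ b * T := by
        rw [Real.rpow_add hT0, Real.rpow_one, Real.inv_rpow (by positivity),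
          ← Real.rpow_mul hT0.le, Real.rpow_neg hT0.le]
    _ ≤ (x / N) ^ b * T := by gcongr
    _ ≤ phaseSize c θ x := rpow_mul_phaseSize_le_of_exponents_le hb θ hx0 hxN

lemma phaseSize_le_rpow_two_mul (hpos : ∀ i, 0 < c i) (hs0 : 0 ≤ s) (hk : 0 ≤ k)
    (hs : k * s ≤ 1 / 2) (hN : 1 ≤ N) (hT : 0 < phaseSize c θ N) (hTk : phaseSize c θ N ≤ N ^ k)
    (hx : N / phaseSize c θ N ^ s ≤ x) (hxN : x ≤ N) : phaseSize c θ x ≤ x ^ (2 * k) := by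
  set T := phaseSize c θ N
  have hN0 : 0 < N := by linarith
  have hx0 : 0 < x := lt_of_lt_of_le (by positivity) hx
  have hTs : T ^ s ≤ N ^ (1 / 2 : ℝ) :=
    calc T ^ s ≤ (N ^ k) ^ s := by gcongr
      _ = N ^ (k * s) := by rw [← Real.rpow_mul hN0.le]
      _ ≤ N ^ (1 / 2 : ℝ) := Real.rpow_le_rpow_of_exponent_le hN hs
  have hsqrt : N ^ (1 / 2 : ℝ) ≤ x :=
    calc N ^ (1 / 2 : ℝ) = N / N ^ (1 / 2 : ℝ) := by
          rw [eq_div_iff (by positivity), ← Real.rpow_add hN0]; norm_num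
      _ ≤ N / T ^ s := by gcongr
      _ ≤ x := hx
  calc phaseSize c θ x ≤ N ^ k := (phaseSize_mono hpos θ hx0.le hxN).trans hTk
    _ = (N ^ (1 / 2 : ℝ)) ^ (2 * k) := by rw [← Real.rpow_mul hN0.le]; congr 1; ring
    _ ≤ x ^ (2 * k) := by gcongr

end Truncation

lemma exists_norm_sum_eC_phase_le (hpos : ∀ i, 0 < c i) (hinj : Function.Injective c)
    (hint : ∀ i, ∀ k : ℕ, c i ≠ k) {k : ℝ} (hk : 0 < k) :
    ∃ C η : ℝ, 0 < C ∧ 0 < η ∧ ∀ (N : ℕ) (θ : ι → ℝ), 1 ≤ N → 1 ≤ phaseSize c θ N →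
      phaseSize c θ N ≤ (N : ℝ) ^ k →
      ‖∑ n ∈ Icc 1 N, eC (phase c θ n)‖ ≤ C * N * phaseSize c θ N ^ (-η) := by
  obtain ⟨C, η, hC, hη, hblock⟩ := exists_hasSmallBlock hpos hinj hint (2 * k)
  obtain ⟨b, hb0, hb⟩ := exists_pos_forall_ge c
  set s : ℝ := 1 / (2 * (b + k)) with hs
  have hs0 : 0 < s := by positivity
  have hsb : s * b ≤ 1 / 2 := by rw [hs]; field_simp; linarith
  have hsk : k * s ≤ 1 / 2 := by rw [hs]; field_simp; linarith
  refine ⟨1 + 2 * C, min s (η / 2), by positivity, by positivity, fun N θ hN hT1 hTk => ?_⟩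
  set T := phaseSize c θ N
  have hT0 : 0 < T := by linarith
  have hN1 : (1 : ℝ) ≤ N := mod_cast hN
  have hN0 : (0 : ℝ) < N := by linarith
  have hblocks : ∀ x : ℕ, N / T ^ s ≤ x → x ≤ N → HasSmallBlock (fun n => eC (phase c θ n)) x
      (C * N * T ^ (-(η / 2))) (C * T ^ (-(η / 2))) := by
    intro x hx hxN
    have hx0 : (0 : ℝ) < x := lt_of_lt_of_le (by positivity) hx
    have hxN : (x : ℝ) ≤ N := mod_cast hxN
    have hS0 := phaseSize_nonneg c θ hx0.le
    have hlow := sqrt_phaseSize_le hb hb0.le hsb hN0 hT1 hx hxN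
    have hup := phaseSize_le_rpow_two_mul hpos hs0.le hk.le hsk hN1 hT0 hTk hx hxN
    have hsaving : phaseSize c θ x ^ (-η) ≤ T ^ (-(η / 2)) :=
      calc phaseSize c θ x ^ (-η) ≤ (T ^ (1 / 2 : ℝ)) ^ (-η) :=
            Real.rpow_le_rpow_of_nonpos (by positivity) hlow (by linarith)
        _ = T ^ (-(η / 2)) := by rw [← Real.rpow_mul hT0.le]; congr 1; ring
    exact (hblock x θ (mod_cast hx0) ((Real.one_le_rpow hT1 (by norm_num)).trans hlow) hup).mono
      (by gcongr) (by gcongr)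
  calc ‖∑ n ∈ Icc 1 N, eC (phase c θ n)‖
      ≤ N / T ^ s + C * T ^ (-(η / 2)) * N + C * N * T ^ (-(η / 2)) :=
        norm_sum_Icc_le_of_hasSmallBlock (fun _ => (norm_eC _).le) (by positivity) (by positivity)
          hN (Real.one_le_rpow hT1 hs0.le) hblocks
    _ = N * T ^ (-s) + 2 * C * N * T ^ (-(η / 2)) := by
        rw [Real.rpow_neg hT0.le s]; ring
    _ ≤ N * T ^ (-min s (η / 2)) + 2 * C * N * T ^ (-min s (η / 2)) := by
        gcongr
        exacts [min_le_left _ _, min_le_right _ _]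
    _ = (1 + 2 * C) * N * T ^ (-min s (η / 2)) := by ring

end PhaseBlocks

/-! ### Tent functions -/

/-- The `1`-periodic tent function of height `1` supported within `1 / Q` of the integers, by which
discontinuous functions of the fractional part are interpolated. For `Q = 1` the two sides of
neighbouring tents overlap and the function is constant. -/
def tent (Q : ℕ) (x : ℝ) : ℝ :=
  Q * (max 0 (1 / Q - Int.fract x) + max 0 (1 / Q - (1 - Int.fract x)))

/-- The Fourier cosine coefficients of `tent Q` at positive frequencies; the division by zero makes
`tentCoeff Q 0 = 0`. -/
def tentCoeff (Q l : ℕ) : ℝ :=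
  Q / Real.pi ^ 2 * (1 - Real.cos (2 * Real.pi * l / Q)) / (l : ℝ) ^ 2

section Tent

variable {Q : ℕ}

lemma tent_nonneg (Q : ℕ) (x : ℝ) : 0 ≤ tent Q x := by unfold tent; positivity

lemma tent_zero (hQ : 1 ≤ Q) : tent Q 0 = 1 := by
  have hQ1 : (1 : ℝ) ≤ Q := mod_cast hQ
  have hinv : (Q : ℝ)⁻¹ ≤ 1 := inv_le_one_of_one_le₀ hQ1
  rw [tent, Int.fract_zero, sub_zero, sub_zero, one_div, max_eq_right (by positivity),
    max_eq_left (by linarith), add_zero, mul_inv_cancel₀ (by positivity)]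

lemma exists_int_abs_sub_lt_of_tent_ne_zero {x : ℝ} (h : tent Q x ≠ 0) :
    ∃ z : ℤ, |x - z| < 1 / Q := by
  have h0 := Int.fract_nonneg x
  have h1 := Int.fract_lt_one x
  have hfloor := Int.self_sub_floor x
  by_contra! hfar
  have hleft := hfar ⌊x⌋
  have hright := hfar (⌊x⌋ + 1)
  rw [hfloor, abs_of_nonneg h0] at hleft
  rw [Int.cast_add, Int.cast_one, ← sub_sub, hfloor, abs_of_neg (by linarith)] at hright
  refine h ?_
  rw [tent, max_eq_left (by linarith), max_eq_left (by linarith), add_zero, mul_zero]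

lemma bernoulliFun_two_fract_add {κ : ℝ} (h0 : 0 ≤ κ) (h1 : κ ≤ 1) (x : ℝ) :
    bernoulliFun 2 (Int.fract (x + κ)) =
      bernoulliFun 2 (Int.fract x + κ) - 2 * max 0 (κ - (1 - Int.fract x)) := by
  have hx0 := Int.fract_nonneg x
  have hx1 := Int.fract_lt_one x
  have hfloor := Int.self_sub_floor x
  simp only [bernoulliFun_two]
  rcases lt_or_ge (Int.fract x + κ) 1 with h | h
  · rw [Int.fract_eq_iff (b := Int.fract x + κ).mpr ⟨by linarith, h, ⌊x⌋, by linarith⟩,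
      max_eq_left (by linarith)]
    ring
  · rw [Int.fract_eq_iff (b := Int.fract x + κ - 1).mpr
      ⟨by linarith, by linarith, ⌊x⌋ + 1, by push_cast; linarith⟩, max_eq_right (by linarith)]
    ring

lemma bernoulliFun_two_fract_sub {κ : ℝ} (h0 : 0 ≤ κ) (h1 : κ ≤ 1) (x : ℝ) :
    bernoulliFun 2 (Int.fract (x - κ)) =
      bernoulliFun 2 (Int.fract x - κ) - 2 * max 0 (κ - Int.fract x) := by
  have hx0 := Int.fract_nonneg x
  have hx1 := Int.fract_lt_one x
  have hfloor := Int.self_sub_floor x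
  simp only [bernoulliFun_two]
  rcases le_or_gt κ (Int.fract x) with h | h
  · rw [Int.fract_eq_iff (b := Int.fract x - κ).mpr ⟨by linarith, by linarith, ⌊x⌋, by linarith⟩,
      max_eq_left (by linarith)]
    ring
  · rw [Int.fract_eq_iff (b := Int.fract x - κ + 1).mpr
      ⟨by linarith, by linarith, ⌊x⌋ - 1, by push_cast; linarith⟩, max_eq_right (by linarith)]
    ring

lemma tent_eq_second_difference (hQ : 1 ≤ Q) (x : ℝ) :
    tent Q x = 1 / Q - Q / 2 * (bernoulliFun 2 (Int.fract (x + 1 / Q)) +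
      bernoulliFun 2 (Int.fract (x - 1 / Q)) - 2 * bernoulliFun 2 (Int.fract x)) := by
  have hQ1 : (1 : ℝ) ≤ Q := mod_cast hQ
  have hκ : 1 / (Q : ℝ) ≤ 1 := div_le_one_of_le₀ hQ1 (by positivity)
  rw [bernoulliFun_two_fract_add (by positivity) hκ, bernoulliFun_two_fract_sub (by positivity) hκ,
    tent]
  simp only [bernoulliFun_two]
  field_simp
  ring

/-- Second differences telescope over a period. -/
lemma sum_tent_translates (hQ : 1 ≤ Q) (x : ℝ) : ∑ q ∈ range Q, tent Q (x - q / Q) = 1 := by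
  have hQ0 : (Q : ℝ) ≠ 0 := by positivity
  set g : ℕ → ℝ := fun q => bernoulliFun 2 (Int.fract (x - q / Q + 1 / Q)) -
    bernoulliFun 2 (Int.fract (x - q / Q)) with hg
  have hterm (q : ℕ) : tent Q (x - q / Q) = 1 / Q - Q / 2 * (g q - g (q + 1)) := by
    have hnext : x - (q + 1 : ℕ) / Q = x - q / Q - 1 / Q := by push_cast; ring
    rw [tent_eq_second_difference hQ]
    simp only [hg, hnext, sub_add_cancel]
    ring
  have hperiod : g Q = g 0 := by
    have hshift : x - 1 + 1 / Q = x + 1 / Q - 1 := by ring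
    simp only [hg, div_self hQ0, Nat.cast_zero, zero_div, sub_zero, hshift, Int.fract_sub_one]
  calc _ = ∑ q ∈ range Q, (1 / (Q : ℝ) - Q / 2 * (g q - g (q + 1))) :=
        sum_congr rfl fun q _ => hterm q
    _ = 1 := by
        rw [sum_sub_distrib, ← mul_sum, sum_range_sub', hperiod, sub_self, mul_zero, sub_zero,
          sum_const, card_range, nsmul_eq_mul, mul_one_div_cancel hQ0]

lemma hasSum_cos_div_sq (x : ℝ) :
    HasSum (fun l : ℕ => Real.cos (2 * Real.pi * l * x) / (l : ℝ) ^ 2)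
      (Real.pi ^ 2 * bernoulliFun 2 (Int.fract x)) := by
  have h := hasSum_one_div_nat_pow_mul_cos one_ne_zero
    (x := Int.fract x) ⟨Int.fract_nonneg x, (Int.fract_lt_one x).le⟩
  convert h using 1
  · funext l
    have hperiod : 2 * Real.pi * l * Int.fract x =
        2 * Real.pi * l * x - ((l * ⌊x⌋ : ℤ) : ℝ) * (2 * Real.pi) := by
      rw [← Int.self_sub_floor]; push_cast; ring
    rw [hperiod, Real.cos_sub_int_mul_two_pi]; ring
  · rw [mul_one, ← bernoulliFun, Nat.factorial_two]
    push_cast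
    ring

lemma hasSum_tent (hQ : 1 ≤ Q) (x : ℝ) :
    HasSum (fun l : ℕ => tentCoeff Q l * Real.cos (2 * Real.pi * l * x)) (tent Q x - 1 / Q) := by
  have hval : tent Q x - 1 / Q = -(Q / 2 / Real.pi ^ 2) *
      (Real.pi ^ 2 * bernoulliFun 2 (Int.fract (x + 1 / Q)) +
        Real.pi ^ 2 * bernoulliFun 2 (Int.fract (x - 1 / Q)) -
        2 * (Real.pi ^ 2 * bernoulliFun 2 (Int.fract x))) := by
    rw [tent_eq_second_difference hQ]
    field_simp
    ring
  have hcoeff (l : ℕ) : tentCoeff Q l * Real.cos (2 * Real.pi * l * x) =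
      -(Q / 2 / Real.pi ^ 2) * (Real.cos (2 * Real.pi * l * (x + 1 / Q)) / (l : ℝ) ^ 2 +
        Real.cos (2 * Real.pi * l * (x - 1 / Q)) / (l : ℝ) ^ 2 -
        2 * (Real.cos (2 * Real.pi * l * x) / (l : ℝ) ^ 2)) := by
    have hangle : 2 * Real.pi * l * (1 / Q) = 2 * Real.pi * l / Q := mul_one_div _ _
    rw [mul_add (2 * Real.pi * l), mul_sub (2 * Real.pi * l), hangle, Real.cos_add, Real.cos_sub,
      tentCoeff]
    ring
  rw [hval, funext hcoeff]
  exact (((hasSum_cos_div_sq (x + 1 / Q)).add (hasSum_cos_div_sq (x - 1 / Q))).sub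
    ((hasSum_cos_div_sq x).mul_left 2)).mul_left _

lemma hasSum_tentCoeff (hQ : 1 ≤ Q) : HasSum (tentCoeff Q) (1 - 1 / Q) := by
  simpa [tent_zero hQ] using hasSum_tent hQ 0

lemma tentCoeff_nonneg (Q l : ℕ) : 0 ≤ tentCoeff Q l := by
  have hcos : 0 ≤ 1 - Real.cos (2 * Real.pi * l / Q) := sub_nonneg.mpr (Real.cos_le_one _)
  unfold tentCoeff
  positivity

lemma tentCoeff_le (Q l : ℕ) : tentCoeff Q l ≤ Q / (l : ℝ) ^ 2 := by
  have hcos := Real.neg_one_le_cos (2 * Real.pi * l / Q)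
  have hpi := Real.pi_gt_three
  unfold tentCoeff
  gcongr
  rw [div_mul_eq_mul_div, div_le_iff₀ (by positivity)]
  gcongr
  nlinarith

lemma tentCoeff_le_rpow {l : ℕ} (hQ : 1 ≤ Q) (hl : Q ^ 6 ≤ l) :
    tentCoeff Q l ≤ (l : ℝ) ^ (-(3 / 2) : ℝ) / Q ^ 2 := by
  have hl0 : (0 : ℝ) < l := mod_cast (Nat.pow_pos hQ).trans_le hl
  have hroot : (Q : ℝ) ^ 3 ≤ (l : ℝ) ^ (1 / 2 : ℝ) :=
    calc (Q : ℝ) ^ 3 = ((Q : ℝ) ^ 6) ^ (1 / 2 : ℝ) := by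
          rw [← Real.rpow_natCast_mul (by positivity), ← Real.rpow_natCast]; norm_num
      _ ≤ (l : ℝ) ^ (1 / 2 : ℝ) := by gcongr; exact_mod_cast hl
  calc tentCoeff Q l ≤ Q / (l : ℝ) ^ 2 := tentCoeff_le Q l
    _ = Q ^ 3 * (l : ℝ) ^ (-2 : ℝ) / Q ^ 2 := by
        rw [Real.rpow_neg hl0.le, Real.rpow_two]; field_simp
    _ ≤ (l : ℝ) ^ (1 / 2 : ℝ) * (l : ℝ) ^ (-2 : ℝ) / Q ^ 2 := by gcongr
    _ = (l : ℝ) ^ (-(3 / 2) : ℝ) / Q ^ 2 := by rw [← Real.rpow_add hl0]; norm_num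

end Tent

/-! ### Removing a fractional part -/

section Interpolation

variable {Q : ℕ} {ξ : ℝ}

lemma abs_fract_sub_le_of_tent_ne_zero {q : ℕ} (hq : q ≠ 0) (hqQ : q < Q) {x : ℝ}
    (h : tent Q (x - q / Q) ≠ 0) : |Int.fract x - q / Q| ≤ 1 / Q := by
  have hQ0 : (0 : ℝ) < Q := mod_cast Nat.zero_lt_of_lt hqQ
  obtain ⟨z, hz⟩ := exists_int_abs_sub_lt_of_tent_ne_zero h
  have hlow : 1 / (Q : ℝ) ≤ q / Q := by gcongr; exact_mod_cast Nat.one_le_iff_ne_zero.mpr hq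
  have hup : q / Q + 1 / (Q : ℝ) ≤ 1 := by
    rw [← add_div, div_le_one hQ0]
    exact_mod_cast hqQ
  have hfract : Int.fract x = x - z := by
    rw [abs_lt] at hz
    exact Int.fract_eq_iff.mpr ⟨by linarith, by linarith, z, by ring⟩
  rw [hfract, sub_right_comm]
  exact hz.le

lemma norm_eC_fract_sub_mul_tent_le (hξ : |ξ| ≤ 1 / 2) {q : ℕ} (hq : q ≠ 0) (hqQ : q < Q)
    (x : ℝ) : ‖eC (-(ξ * Int.fract x)) - eC (-(ξ * (q / Q)))‖ * tent Q (x - q / Q) ≤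
      Real.pi / Q * tent Q (x - q / Q) := by
  rcases eq_or_ne (tent Q (x - q / Q)) 0 with hzero | hne
  · simp only [hzero, mul_zero, le_refl]
  · refine mul_le_mul_of_nonneg_right ?_ (tent_nonneg _ _)
    have hclose := abs_fract_sub_le_of_tent_ne_zero hq hqQ hne
    have hpi := Real.pi_pos
    calc ‖eC (-(ξ * Int.fract x)) - eC (-(ξ * (q / Q)))‖
        ≤ 2 * Real.pi * |-(ξ * Int.fract x) - -(ξ * (q / Q))| := norm_eC_sub_le _ _
      _ = 2 * Real.pi * (|ξ| * |Int.fract x - q / Q|) := by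
          rw [← abs_mul, ← abs_neg]; congr 2; ring
      _ ≤ 2 * Real.pi * (1 / 2 * (1 / Q)) := by gcongr
      _ = Real.pi / Q := by ring

/-- Only the tent at the integers meets the discontinuity of the fractional part. -/
lemma norm_eC_fract_sub_sum_tent_le (hQ : 1 ≤ Q) (hξ : |ξ| ≤ 1 / 2) (x : ℝ) :
    ‖eC (-(ξ * Int.fract x)) - ∑ q ∈ range Q, eC (-(ξ * (q / Q))) * (tent Q (x - q / Q) : ℂ)‖ ≤
      Real.pi / Q + 2 * tent Q x := by
  have hpartition : eC (-(ξ * Int.fract x)) =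
      ∑ q ∈ range Q, eC (-(ξ * Int.fract x)) * (tent Q (x - q / Q) : ℂ) := by
    rw [← mul_sum, ← Complex.ofReal_sum, sum_tent_translates hQ x, Complex.ofReal_one, mul_one]
  have hterm : ∀ q ∈ range Q, ‖eC (-(ξ * Int.fract x)) * (tent Q (x - q / Q) : ℂ) -
      eC (-(ξ * (q / Q))) * (tent Q (x - q / Q) : ℂ)‖ ≤
      Real.pi / Q * tent Q (x - q / Q) + if q = 0 then 2 * tent Q x else 0 := by
    intro q hq
    have htent := tent_nonneg Q (x - q / Q)
    rw [← sub_mul, norm_mul, Complex.norm_real, Real.norm_of_nonneg htent]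
    split_ifs with h0
    · have htwo : ‖eC (-(ξ * Int.fract x)) - eC (-(ξ * (q / Q)))‖ ≤ 2 :=
        (norm_sub_le _ _).trans_eq (by rw [norm_eC, norm_eC]; norm_num)
      have hmul := mul_le_mul_of_nonneg_right htwo htent
      have hmain : 0 ≤ Real.pi / Q * tent Q (x - q / Q) := by positivity
      simp only [h0, Nat.cast_zero, zero_div, sub_zero] at hmul hmain ⊢
      linarith
    · rw [add_zero]
      exact norm_eC_fract_sub_mul_tent_le hξ h0 (mem_range.mp hq) x
  rw [hpartition, ← sum_sub_distrib]
  refine (norm_sum_le_of_le _ hterm).trans_eq ?_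
  rw [sum_add_distrib, ← mul_sum, sum_tent_translates hQ x, mul_one, sum_ite_eq',
    if_pos (mem_range.mpr hQ)]

end Interpolation

section Twist

variable {α : Type*} {s : Finset α} {f : α → ℂ} {x : α → ℝ} {Q : ℕ} {B ξ : ℝ}

lemma norm_sum_mul_cos_le {r : ℝ} (hpos : ‖∑ n ∈ s, f n * eC (r * x n)‖ ≤ B)
    (hneg : ‖∑ n ∈ s, f n * eC (-r * x n)‖ ≤ B) (y : ℝ) :
    ‖∑ n ∈ s, f n * (Real.cos (2 * Real.pi * r * (x n - y)) : ℂ)‖ ≤ B := by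
  have hterm (n : α) : f n * (Real.cos (2 * Real.pi * r * (x n - y)) : ℂ) =
      1 / 2 * (eC (-(r * y)) * (f n * eC (r * x n)) + eC (r * y) * (f n * eC (-r * x n))) := by
    have hcos := eC_add_eC_neg (-(r * y) + r * x n)
    rw [(by ring : -(-(r * y) + r * x n) = r * y + -r * x n), eC_add, eC_add] at hcos
    rw [(by ring : 2 * Real.pi * r * (x n - y) = 2 * Real.pi * (-(r * y) + r * x n))]
    linear_combination (-(f n / 2)) * hcos
  simp only [hterm, ← mul_sum, sum_add_distrib]
  calc _ ≤ ‖(1 / 2 : ℂ)‖ * (‖eC (-(r * y))‖ * ‖∑ n ∈ s, f n * eC (r * x n)‖ +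
        ‖eC (r * y)‖ * ‖∑ n ∈ s, f n * eC (-r * x n)‖) := by
        refine (norm_mul_le _ _).trans (mul_le_mul_of_nonneg_left ?_ (norm_nonneg _))
        exact (norm_add_le _ _).trans_eq (by rw [norm_mul, norm_mul])
    _ ≤ 1 / 2 * (1 * B + 1 * B) := by
        rw [norm_eC, norm_eC, (by norm_num : ‖(1 / 2 : ℂ)‖ = 1 / 2)]
        gcongr
    _ = B := by ring

lemma norm_sum_mul_tentCoeff_mul_cos_le (hQ : 1 ≤ Q) (hf : ∀ n, ‖f n‖ ≤ 1) (hB0 : 0 ≤ B)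
    (hB : ∀ l : ℤ, l ≠ 0 → |l| ≤ (Q : ℤ) ^ 6 → ‖∑ n ∈ s, f n * eC (l * x n)‖ ≤ B) (y : ℝ)
    (l : ℕ) :
    ‖∑ n ∈ s, f n * ((tentCoeff Q l * Real.cos (2 * Real.pi * l * (x n - y)) : ℝ) : ℂ)‖ ≤
      tentCoeff Q l * B + #s / Q ^ 2 * (l : ℝ) ^ (-(3 / 2) : ℝ) := by
  have hcoeff := tentCoeff_nonneg Q l
  have hfactor : ∑ n ∈ s, f n * ((tentCoeff Q l * Real.cos (2 * Real.pi * l * (x n - y)) : ℝ) : ℂ)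
      = tentCoeff Q l * ∑ n ∈ s, f n * (Real.cos (2 * Real.pi * l * (x n - y)) : ℂ) := by
    rw [mul_sum]
    exact sum_congr rfl fun n _ => by push_cast; ring
  rw [hfactor, norm_mul, Complex.norm_real, Real.norm_of_nonneg hcoeff]
  rcases Nat.eq_zero_or_pos l with rfl | hl
  · simp [tentCoeff]
  rcases le_or_gt l (Q ^ 6) with hlow | hhigh
  · have hcos := norm_sum_mul_cos_le (s := s) (f := f) (x := x) (r := l) (B := B)
      (mod_cast hB l (mod_cast hl.ne') (by rw [Nat.abs_cast]; exact_mod_cast hlow))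
      (mod_cast hB (-l) (by simpa using hl.ne')
        (by rw [abs_neg, Nat.abs_cast]; exact_mod_cast hlow)) y
    exact (mul_le_mul_of_nonneg_left hcos hcoeff).trans (le_add_of_nonneg_right (by positivity))
  · have htrivial : ‖∑ n ∈ s, f n * (Real.cos (2 * Real.pi * l * (x n - y)) : ℂ)‖ ≤ #s := by
      refine (norm_sum_le_of_le s fun n _ => ?_).trans_eq (by simp : ∑ _n ∈ s, (1 : ℝ) = #s)
      rw [norm_mul, Complex.norm_real]
      exact mul_le_one₀ (hf n) (norm_nonneg _) (Real.abs_cos_le_one _)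
    calc _ ≤ (l : ℝ) ^ (-(3 / 2) : ℝ) / Q ^ 2 * #s :=
          mul_le_mul (tentCoeff_le_rpow hQ hhigh.le) htrivial (norm_nonneg _) (by positivity)
      _ = #s / Q ^ 2 * (l : ℝ) ^ (-(3 / 2) : ℝ) := by ring
      _ ≤ _ := le_add_of_nonneg_left (by positivity)

lemma norm_sum_mul_tent_le (hQ : 1 ≤ Q) (hf : ∀ n, ‖f n‖ ≤ 1) {B₀ : ℝ}
    (h0 : ‖∑ n ∈ s, f n‖ ≤ B₀) (hB0 : 0 ≤ B)
    (hB : ∀ l : ℤ, l ≠ 0 → |l| ≤ (Q : ℤ) ^ 6 → ‖∑ n ∈ s, f n * eC (l * x n)‖ ≤ B) (y : ℝ) :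
    ‖∑ n ∈ s, f n * (tent Q (x n - y) : ℂ)‖ ≤
      B₀ / Q + B + (∑' l : ℕ, (l : ℝ) ^ (-(3 / 2) : ℝ)) * #s / Q ^ 2 := by
  have hsum : HasSum (fun l : ℕ => ∑ n ∈ s, f n *
      ((tentCoeff Q l * Real.cos (2 * Real.pi * l * (x n - y)) : ℝ) : ℂ))
      (∑ n ∈ s, f n * ((tent Q (x n - y) - 1 / Q : ℝ) : ℂ)) :=
    hasSum_sum fun n _ => (Complex.hasSum_ofReal.mpr (hasSum_tent hQ (x n - y))).mul_left (f n)
  have hmajorant : HasSum (fun l : ℕ => tentCoeff Q l * B + #s / Q ^ 2 * (l : ℝ) ^ (-(3 / 2) : ℝ))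
      ((1 - 1 / Q) * B + #s / Q ^ 2 * ∑' l : ℕ, (l : ℝ) ^ (-(3 / 2) : ℝ)) :=
    ((hasSum_tentCoeff hQ).mul_right B).add
      ((Real.summable_nat_rpow.mpr (by norm_num)).hasSum.mul_left _)
  have hosc := hsum.norm_le_of_bounded hmajorant
    (norm_sum_mul_tentCoeff_mul_cos_le hQ hf hB0 hB y)
  have hmean : ∑ n ∈ s, f n * (tent Q (x n - y) : ℂ) = ((1 / Q : ℝ) : ℂ) * ∑ n ∈ s, f n +
      ∑ n ∈ s, f n * ((tent Q (x n - y) - 1 / Q : ℝ) : ℂ) := by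
    rw [mul_sum, ← sum_add_distrib]
    exact sum_congr rfl fun n _ => by push_cast; ring
  have hone : (1 - 1 / (Q : ℝ)) * B ≤ B := mul_le_of_le_one_left hB0 (by simp)
  rw [hmean]
  calc _ ≤ 1 / Q * B₀ +
        ((1 - 1 / Q) * B + #s / Q ^ 2 * ∑' l : ℕ, (l : ℝ) ^ (-(3 / 2) : ℝ)) := by
        refine (norm_add_le _ _).trans (add_le_add ?_ hosc)
        rw [norm_mul, Complex.norm_real, Real.norm_of_nonneg (by positivity)]
        gcongr
    _ ≤ 1 / Q * B₀ + (B + #s / Q ^ 2 * ∑' l : ℕ, (l : ℝ) ^ (-(3 / 2) : ℝ)) := by gcongr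
    _ = _ := by ring

lemma sum_tent_le (hQ : 1 ≤ Q) (hB0 : 0 ≤ B)
    (hB : ∀ l : ℤ, l ≠ 0 → |l| ≤ (Q : ℤ) ^ 6 → ‖∑ n ∈ s, eC (l * x n)‖ ≤ B) :
    ∑ n ∈ s, tent Q (x n) ≤ #s / Q + B + (∑' l : ℕ, (l : ℝ) ^ (-(3 / 2) : ℝ)) * #s / Q ^ 2 := by
  have h := norm_sum_mul_tent_le (s := s) (f := fun _ => 1) (x := x) (B₀ := #s) hQ (by simp)
    (by simp) hB0 (by simpa only [one_mul] using hB) 0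
  simp only [sub_zero, one_mul] at h
  rwa [← Complex.ofReal_sum, Complex.norm_real,
    Real.norm_of_nonneg (sum_nonneg fun n _ => tent_nonneg Q _)] at h

lemma norm_sum_mul_eC_fract_le (hQ : 1 ≤ Q) (hf : ∀ n, ‖f n‖ ≤ 1) (hξ : |ξ| ≤ 1 / 2)
    (hB : ∀ y, ‖∑ n ∈ s, f n * (tent Q (x n - y) : ℂ)‖ ≤ B) :
    ‖∑ n ∈ s, f n * eC (-(ξ * Int.fract (x n)))‖ ≤
      #s * (Real.pi / Q) + 2 * ∑ n ∈ s, tent Q (x n) + Q * B := by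
  have hsplit : ∑ n ∈ s, f n * eC (-(ξ * Int.fract (x n))) =
      ∑ n ∈ s, f n * (eC (-(ξ * Int.fract (x n))) -
        ∑ q ∈ range Q, eC (-(ξ * (q / Q))) * (tent Q (x n - q / Q) : ℂ)) +
      ∑ q ∈ range Q, eC (-(ξ * (q / Q))) * ∑ n ∈ s, f n * (tent Q (x n - q / Q) : ℂ) := by
    simp only [mul_sub, sum_sub_distrib, mul_sum, mul_left_comm (f _)]
    rw [sum_comm (s := range Q), sub_add_cancel]
  have herror : ‖∑ n ∈ s, f n * (eC (-(ξ * Int.fract (x n))) -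
        ∑ q ∈ range Q, eC (-(ξ * (q / Q))) * (tent Q (x n - q / Q) : ℂ))‖ ≤
      ∑ n ∈ s, (Real.pi / Q + 2 * tent Q (x n)) := by
    refine norm_sum_le_of_le _ fun n _ => ?_
    rw [norm_mul]
    exact (mul_le_of_le_one_left (norm_nonneg _) (hf n)).trans
      (norm_eC_fract_sub_sum_tent_le hQ hξ (x n))
  have hmain : ‖∑ q ∈ range Q, eC (-(ξ * (q / Q))) * ∑ n ∈ s, f n * (tent Q (x n - q / Q) : ℂ)‖ ≤
      ∑ _q ∈ range Q, B :=
    norm_sum_le_of_le _ fun q _ => by simpa only [norm_mul, norm_eC, one_mul] using hB _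
  rw [sum_add_distrib, ← mul_sum, sum_const, nsmul_eq_mul] at herror
  rw [sum_const, nsmul_eq_mul, card_range] at hmain
  rw [hsplit]
  exact (norm_add_le _ _).trans (add_le_add herror hmain)

lemma exists_norm_sum_mul_eC_fract_le : ∃ C : ℝ, 0 < C ∧ ∀ (Q : ℕ) (s : Finset α) (f : α → ℂ)
    (x : α → ℝ) (ξ B B' : ℝ), 1 ≤ Q → (∀ n, ‖f n‖ ≤ 1) → |ξ| ≤ 1 / 2 →
    (∀ l : ℤ, |l| ≤ (Q : ℤ) ^ 6 → ‖∑ n ∈ s, f n * eC (l * x n)‖ ≤ B) →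
    (∀ l : ℤ, l ≠ 0 → |l| ≤ (Q : ℤ) ^ 6 → ‖∑ n ∈ s, eC (l * x n)‖ ≤ B') →
    ‖∑ n ∈ s, f n * eC (-(ξ * Int.fract (x n)))‖ ≤ C * (Q * B + B' + #s / Q) := by
  set S : ℝ := ∑' l : ℕ, (l : ℝ) ^ (-(3 / 2) : ℝ)
  have hS0 : 0 ≤ S := tsum_nonneg fun l => by positivity
  have hpi := Real.pi_pos
  refine ⟨3 * S + Real.pi + 2, by linarith, fun Q s f x ξ B B' hQ hf hξ hB hB' => ?_⟩
  have hQ1 : (1 : ℝ) ≤ Q := mod_cast hQ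
  have hzero : ‖∑ n ∈ s, f n‖ ≤ B := by
    simpa [eC_zero] using hB 0 (by rw [abs_zero]; positivity)
  have hB0 : 0 ≤ B := (norm_nonneg _).trans hzero
  have hB'0 : 0 ≤ B' := (norm_nonneg _).trans (hB' 1 one_ne_zero (by
    rw [abs_one]; exact one_le_pow₀ (mod_cast hQ)))
  have htail : S * #s / (Q : ℝ) ^ 2 ≤ S * (#s / Q) := by
    rw [mul_div_assoc]
    gcongr
    exact le_self_pow₀ hQ1 two_ne_zero
  have htwisted := norm_sum_mul_eC_fract_le hQ hf hξ
    (norm_sum_mul_tent_le hQ hf hzero hB0 fun l _ => hB l)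
  have htent := sum_tent_le hQ hB'0 hB'
  have hBQ : B ≤ Q * B := le_mul_of_one_le_left hB0 hQ1
  have hnonneg : 0 ≤ (3 * S + Real.pi) * (Q * B + B') := by positivity
  calc _ ≤ #s * (Real.pi / Q) + 2 * ∑ n ∈ s, tent Q (x n) +
        Q * (B / Q + B + S * #s / Q ^ 2) := htwisted
    _ = Real.pi * (#s / Q) + 2 * ∑ n ∈ s, tent Q (x n) + (B + Q * B + S * (#s / Q)) := by
        field_simp
    _ ≤ Real.pi * (#s / Q) + 2 * (#s / Q + B' + S * (#s / Q)) +
        (Q * B + Q * B + S * (#s / Q)) := by linarith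
    _ ≤ _ := by linarith

end Twist

/-! ### Phases with integer parts -/

lemma abs_le_abs_add_intCast {ξ : ℝ} (hξ : |ξ| ≤ 1 / 2) (l : ℤ) : |ξ| ≤ |ξ + l| := by
  rcases eq_or_ne l 0 with rfl | hl
  · simp
  · have hone : (1 : ℝ) ≤ |(l : ℝ)| := mod_cast Int.one_le_abs hl
    have htriangle : |(l : ℝ)| ≤ |ξ + l| + |ξ| := by
      simpa only [add_sub_cancel_left] using abs_sub (ξ + l) ξ
    linarith

lemma exists_nat_pow_six_le {A s : ℝ} (hA : 1 ≤ A) (hs0 : 0 ≤ s) (hs : s ≤ 1 / 6) :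
    ∃ Q : ℕ, 1 ≤ Q ∧ (Q : ℝ) ^ 6 ≤ A ∧ (Q : ℝ) ≤ A ^ s ∧ 1 / (Q : ℝ) ≤ 2 * A ^ (-s) := by
  have hA0 : 0 < A := one_pos.trans_le hA
  have hAs : 1 ≤ A ^ s := Real.one_le_rpow hA hs0
  have hfloor : (⌊A ^ s⌋₊ : ℝ) ≤ A ^ s := Nat.floor_le (by positivity)
  refine ⟨⌊A ^ s⌋₊, Nat.le_floor (mod_cast hAs), ?_, hfloor, ?_⟩
  · calc (⌊A ^ s⌋₊ : ℝ) ^ 6 ≤ (A ^ s) ^ 6 := by gcongr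
      _ = A ^ (s * 6) := by rw [← Real.rpow_mul_natCast hA0.le]; norm_num
      _ ≤ A := Real.rpow_le_self_of_one_le hA (by linarith)
  · calc 1 / (⌊A ^ s⌋₊ : ℝ) ≤ 1 / (A ^ s / 2) :=
          one_div_le_one_div_of_le (by positivity) (half_le_natFloor hAs)
      _ = 2 * A ^ (-s) := by rw [Real.rpow_neg hA0.le]; field_simp

section PowerSaving

variable {ι : Type*} [Fintype ι] {c θ : ι → ℝ} {I : Finset ι} {i : ι}

lemma phaseSize_le_rpow {b : ℝ} (hb : ∀ i, c i ≤ b) {N : ℝ} (hN : 2 ≤ N)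
    (hθ : ∀ i, |θ i| ≤ N ^ 2) : phaseSize c θ N ≤ N ^ (b + Fintype.card ι + 2) := by
  have hN0 : 0 < N := by linarith
  have hcard : (Fintype.card ι : ℝ) ≤ N ^ Fintype.card ι :=
    calc (Fintype.card ι : ℝ) ≤ 2 ^ Fintype.card ι := mod_cast Nat.lt_two_pow_self.le
      _ ≤ N ^ Fintype.card ι := by gcongr
  calc phaseSize c θ N ≤ ∑ _i : ι, N ^ 2 * N ^ b := by
        refine sum_le_sum fun i _ => ?_
        gcongr
        exacts [hθ i, by linarith, hb i]
    _ = Fintype.card ι * (N ^ 2 * N ^ b) := by rw [sum_const, card_univ, nsmul_eq_mul]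
    _ ≤ N ^ Fintype.card ι * (N ^ 2 * N ^ b) := by gcongr
    _ = N ^ (b + Fintype.card ι + 2) := by
        rw [Real.rpow_add hN0, Real.rpow_add hN0, Real.rpow_natCast, Real.rpow_two]
        ring

lemma phase_add_single [DecidableEq ι] (c θ : ι → ℝ) (i : ι) (r t : ℝ) :
    phase c (θ + Pi.single i r) t = phase c θ t + r * t ^ c i := by
  simp [phase, add_mul, sum_add_distrib, Pi.single_apply]

lemma phaseSize_le_phaseSize_add_single [DecidableEq ι] (c : ι → ℝ) (hi : |θ i| ≤ 1 / 2) (l : ℤ)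
    {x : ℝ} (hx : 0 ≤ x) : phaseSize c θ x ≤ phaseSize c (θ + Pi.single i (l : ℝ)) x := by
  refine sum_le_sum fun j _ => mul_le_mul_of_nonneg_right ?_ (by positivity)
  rcases eq_or_ne j i with rfl | hj
  · rw [Pi.add_apply, Pi.single_eq_same]
    exact abs_le_abs_add_intCast hi l
  · rw [Pi.add_apply, Pi.single_eq_of_ne hj, add_zero]

/-- Saving of a power `A ^ (-η)` in the exponential sums with phase `∑ i, θ i * n ^ c i` in which
`n ^ c i` is replaced by its integer part for the indices in `I`. The parameter `A` bounds the
length of the sum and the size of the phase from below. -/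
def PowerSaving (c : ι → ℝ) (I : Finset ι) (C η : ℝ) : Prop :=
  ∀ (A : ℝ) (N : ℕ) (θ : ι → ℝ), 1 < A → A ≤ N → (∀ i, |θ i| ≤ (N : ℝ) ^ 2) →
    (∀ i ∈ I, |θ i| ≤ 1 / 2) → A ≤ phaseSize c θ N →
    ‖∑ n ∈ Icc 1 N, eC (phase c θ n) * ∏ i ∈ I, eC (-(θ i * Int.fract ((n : ℝ) ^ c i)))‖ ≤
      C * N * A ^ (-η)

namespace PowerSaving

variable {C C₀ η η₀ A : ℝ} {N : ℕ}

lemma exists_empty (hpos : ∀ i, 0 < c i) (hinj : Function.Injective c)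
    (hint : ∀ i, ∀ k : ℕ, c i ≠ k) : ∃ C η, 0 < C ∧ 0 < η ∧ PowerSaving c ∅ C η := by
  obtain ⟨b, hb0, hb⟩ := exists_pos_forall_ge c
  obtain ⟨C, η, hC, hη, hbound⟩ := exists_norm_sum_eC_phase_le hpos hinj hint
    (k := b + Fintype.card ι + 2) (by positivity)
  refine ⟨C, η, hC, hη, fun A N θ hA hAN hθ _ hsize => ?_⟩
  have hN : 1 < N := by exact_mod_cast hA.trans_le hAN
  simp only [prod_empty, mul_one]
  calc _ ≤ C * N * phaseSize c θ N ^ (-η) := hbound N θ hN.le (hA.le.trans hsize)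
        (phaseSize_le_rpow hb (mod_cast hN) hθ)
    _ ≤ C * N * A ^ (-η) := by
        gcongr C * N * ?_
        exact Real.rpow_le_rpow_of_nonpos (by linarith) hsize (by linarith)

lemma norm_sum_mul_eC_intCast_mul_le [DecidableEq ι] (h : PowerSaving c I C η) (hi : i ∉ I)
    (hA : 1 < A) (hAN : A ≤ N) (hθ : ∀ j, |θ j| ≤ (N : ℝ) ^ 2)
    (hI : ∀ j ∈ insert i I, |θ j| ≤ 1 / 2) (hsize : A ≤ phaseSize c θ N) {l : ℤ}
    (hl : |(l : ℝ)| ≤ N) :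
    ‖∑ n ∈ Icc 1 N, eC (phase c θ n) * (∏ j ∈ I, eC (-(θ j * Int.fract ((n : ℝ) ^ c j)))) *
      eC (l * (n : ℝ) ^ c i)‖ ≤ C * N * A ^ (-η) := by
  have hN : (2 : ℝ) ≤ N := by exact_mod_cast (by exact_mod_cast hA.trans_le hAN : 1 < N)
  have hθi : |θ i| ≤ 1 / 2 := hI i (mem_insert_self i I)
  have hne {j : ι} (hj : j ≠ i) : (θ + Pi.single i (l : ℝ) : ι → ℝ) j = θ j := by
    rw [Pi.add_apply, Pi.single_eq_of_ne hj, add_zero]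
  have hneI {j : ι} (hj : j ∈ I) : j ≠ i := ne_of_mem_of_not_mem hj hi
  have hbound (j : ι) : |(θ + Pi.single i (l : ℝ) : ι → ℝ) j| ≤ (N : ℝ) ^ 2 := by
    rcases eq_or_ne j i with rfl | hj
    · rw [Pi.add_apply, Pi.single_eq_same]
      nlinarith [abs_add_le (θ j) l]
    · exact (congrArg abs (hne hj)).trans_le (hθ j)
  refine (congrArg norm (sum_congr rfl fun n _ => ?_)).trans_le (h A N (θ + Pi.single i (l : ℝ)) hA
    hAN hbound (fun j hj => by rw [hne (hneI hj)]; exact hI j (mem_insert_of_mem hj))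
    (hsize.trans (phaseSize_le_phaseSize_add_single c hθi l (by positivity))))
  rw [phase_add_single, eC_add, mul_right_comm]
  exact congrArg _ (prod_congr rfl fun j hj => by rw [hne (hneI hj)])

lemma norm_sum_eC_intCast_mul_le (h : PowerSaving c ∅ C η) (hc : 0 < c i) (hA : 1 < A)
    (hAN : A ≤ N) {l : ℤ} (hl0 : l ≠ 0) (hl : |(l : ℝ)| ≤ N) :
    ‖∑ n ∈ Icc 1 N, eC (l * (n : ℝ) ^ c i)‖ ≤ C * N * A ^ (-(η * min 1 (c i))) := by
  classical
  have hA0 : 0 < A := one_pos.trans hA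
  have hN : (1 : ℝ) ≤ N := hA.le.trans hAN
  have hexp : 0 < min 1 (c i) := lt_min one_pos hc
  have hpow : A ^ min 1 (c i) ≤ N :=
    (Real.rpow_le_self_of_one_le hA.le (min_le_left _ _)).trans hAN
  have hbound (j : ι) : |(Pi.single i (l : ℝ) : ι → ℝ) j| ≤ (N : ℝ) ^ 2 := by
    rcases eq_or_ne j i with rfl | hj
    · rw [Pi.single_eq_same]
      exact hl.trans (le_self_pow₀ hN two_ne_zero)
    · rw [Pi.single_eq_of_ne hj, abs_zero]
      positivity
  have hsize : A ^ min 1 (c i) ≤ phaseSize c (Pi.single i (l : ℝ)) N :=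
    calc A ^ min 1 (c i) ≤ A ^ c i := Real.rpow_le_rpow_of_exponent_le hA.le (min_le_right _ _)
      _ ≤ (N : ℝ) ^ c i := Real.rpow_le_rpow hA0.le hAN hc.le
      _ ≤ |(l : ℝ)| * (N : ℝ) ^ c i :=
          le_mul_of_one_le_left (by positivity) (mod_cast Int.one_le_abs hl0)
      _ = |(Pi.single i (l : ℝ) : ι → ℝ) i| * (N : ℝ) ^ c i := by rw [Pi.single_eq_same]
      _ ≤ _ := single_le_sum (f := fun j => |(Pi.single i (l : ℝ) : ι → ℝ) j| * (N : ℝ) ^ c j)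
          (fun j _ => by positivity) (mem_univ i)
  have hmain := h _ N (Pi.single i (l : ℝ)) (Real.one_lt_rpow hA hexp) hpow hbound (by simp) hsize
  have hphase (t : ℝ) : phase c (Pi.single i (l : ℝ)) t = l * t ^ c i := by
    simpa [phase] using phase_add_single c 0 i l t
  simpa only [prod_empty, mul_one, hphase, ← Real.rpow_mul hA0.le, mul_neg, mul_comm _ η]
    using hmain

/-- The factor `e(-θᵢ {n ^ cᵢ})` is removed by a Fourier expansion, which changes the coefficient of
`n ^ cᵢ` by integers. -/
lemma exists_insert [DecidableEq ι] (h : PowerSaving c I C η) (h₀ : PowerSaving c ∅ C₀ η₀)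
    (hC : 0 < C) (hη : 0 < η) (hC₀ : 0 < C₀) (hη₀ : 0 < η₀) (hc : 0 < c i) (hi : i ∉ I) :
    ∃ C' η', 0 < C' ∧ 0 < η' ∧ PowerSaving c (insert i I) C' η' := by
  obtain ⟨D, hD, htwist⟩ := exists_norm_sum_mul_eC_fract_le (α := ℕ)
  obtain ⟨s, hs0, hs⟩ := exists_pos_forall_le (f := ![η / 2, η₀ * min 1 (c i), 1 / 6]) (by
    have hmin : 0 < min 1 (c i) := lt_min one_pos hc
    simp only [Fin.forall_fin_succ]
    simp [hη, hη₀, hc])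
  have hsη : s ≤ η / 2 := hs 0
  have hsη₀ : s ≤ η₀ * min 1 (c i) := hs 1
  refine ⟨D * (C + C₀ + 2), s, by positivity, hs0, fun A N θ hA hAN hθ hI hsize => ?_⟩
  have hA0 : 0 < A := one_pos.trans hA
  obtain ⟨Q, hQ1, hQ6, hQA, hQinv⟩ := exists_nat_pow_six_le hA.le hs0.le (hs 2)
  have hl {l : ℤ} (hlQ : |l| ≤ (Q : ℤ) ^ 6) : |(l : ℝ)| ≤ N :=
    (by exact_mod_cast hlQ : |(l : ℝ)| ≤ (Q : ℝ) ^ 6).trans (hQ6.trans hAN)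
  have hshift : Q * (C * N * A ^ (-η)) ≤ C * N * A ^ (-s) :=
    calc Q * (C * N * A ^ (-η)) ≤ A ^ s * (C * N * A ^ (-η)) := by gcongr
      _ = C * N * A ^ (s - η) := by rw [sub_eq_add_neg, Real.rpow_add hA0]; ring
      _ ≤ C * N * A ^ (-s) := by gcongr <;> linarith
  have hpure : C₀ * N * A ^ (-(η₀ * min 1 (c i))) ≤ C₀ * N * A ^ (-s) := by gcongr; exact hA.le
  simp only [prod_insert hi, mul_comm (eC (-(θ i * _))), ← mul_assoc]
  calc _ ≤ D * (Q * (C * N * A ^ (-η)) + C₀ * N * A ^ (-(η₀ * min 1 (c i))) + #(Icc 1 N) / Q) :=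
        htwist Q (Icc 1 N) _ (fun n => (n : ℝ) ^ c i) (θ i) _ _ hQ1
          (fun n => by simp [norm_prod, norm_eC]) (hI i (mem_insert_self i I))
          (fun l hlQ => h.norm_sum_mul_eC_intCast_mul_le hi hA hAN hθ hI hsize (hl hlQ))
          (fun l hl0 hlQ => h₀.norm_sum_eC_intCast_mul_le hc hA hAN hl0 (hl hlQ))
    _ ≤ D * (C * N * A ^ (-s) + C₀ * N * A ^ (-s) + N * (2 * A ^ (-s))) := by
        rw [Nat.card_Icc, Nat.add_sub_cancel, ← mul_one_div (N : ℝ)]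
        gcongr
    _ = D * (C + C₀ + 2) * N * A ^ (-s) := by ring

lemma exists_of_exponents_ne_natCast (hpos : ∀ i, 0 < c i) (hinj : Function.Injective c)
    (hint : ∀ i, ∀ k : ℕ, c i ≠ k) (I : Finset ι) :
    ∃ C η, 0 < C ∧ 0 < η ∧ PowerSaving c I C η := by
  classical
  obtain ⟨C₀, η₀, hC₀, hη₀, hempty⟩ := exists_empty hpos hinj hint
  induction I using Finset.induction_on with
  | empty => exact ⟨C₀, η₀, hC₀, hη₀, hempty⟩
  | insert i I hi ih =>
    obtain ⟨C, η, hC, hη, h⟩ := ih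
    exact h.exists_insert hempty hC hη hC₀ hη₀ (hpos i) hi

end PowerSaving

end PowerSaving

lemma eC_sum {α : Type*} (s : Finset α) (g : α → ℝ) : eC (∑ i ∈ s, g i) = ∏ i ∈ s, eC (g i) := by
  classical
  induction s using Finset.induction_on with
  | empty => simp [eC_zero]
  | insert i s hi ih => rw [sum_insert hi, prod_insert hi, eC_add, ih]

lemma eC_phase_mul_prod_eC_fract {ι : Type*} [Fintype ι] (c θ : ι → ℝ) (t : ℝ) :
    eC (phase c θ t) * ∏ i, eC (-(θ i * Int.fract (t ^ c i))) =
      eC (∑ i, θ i * (⌊t ^ c i⌋ : ℝ)) := by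
  rw [← eC_sum, ← eC_add, phase, ← sum_add_distrib]
  congr 1
  refine sum_congr rfl fun i _ => ?_
  rw [← Int.self_sub_floor]
  ring

lemma exists_norm_expSum_le {m : ℕ} {c : Fin m → ℝ} (hpos : ∀ i, 0 < c i)
    (hinj : Function.Injective c) (hint : ∀ i, ∀ k : ℕ, c i ≠ k) :
    ∃ C η : ℝ, 0 < C ∧ 0 < η ∧ ∀ (A : ℝ) (N : ℕ) (ξ : Fin m → ℝ), 1 < A → A ≤ N →
      (∀ i, |ξ i| ≤ 1 / 2) → A ≤ phaseSize c ξ N → ‖expSum m c ξ N‖ ≤ C * A ^ (-η) := by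
  obtain ⟨C, η, hC, hη, hsaving⟩ := PowerSaving.exists_of_exponents_ne_natCast hpos hinj hint univ
  refine ⟨C, η, hC, hη, fun A N ξ hA hAN hξ hsize => ?_⟩
  have hN : (1 : ℝ) ≤ N := hA.le.trans hAN
  have hN0 : (0 : ℝ) < N := one_pos.trans_le hN
  have hsum := hsaving A N ξ hA hAN
    (fun i => (hξ i).trans (by linarith [one_le_pow₀ hN (n := 2)])) (fun i _ => hξ i) hsize
  simp only [eC_phase_mul_prod_eC_fract] at hsum
  rw [expSum, norm_mul, norm_inv, Complex.norm_natCast, inv_mul_le_iff₀ hN0]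
  exact hsum.trans_eq (by ring)

/-! ### Chains of jumps -/

lemma norm_inv_mul_sum_sub_le {f : ℕ → ℂ} (hf : ∀ n, ‖f n‖ ≤ 1) {N M : ℕ} (hN : 0 < N)
    (hNM : N ≤ M) : ‖(M : ℂ)⁻¹ * ∑ n ∈ Icc 1 M, f n - (N : ℂ)⁻¹ * ∑ n ∈ Icc 1 N, f n‖ ≤
      2 * (1 - N / M) := by
  have hN0 : (0 : ℝ) < N := mod_cast hN
  have hNM' : (N : ℝ) ≤ M := mod_cast hNM
  have hM0 : (0 : ℝ) < M := hN0.trans_le hNM'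
  have hsum (s : Finset ℕ) : ‖∑ n ∈ s, f n‖ ≤ #s :=
    (norm_sum_le_of_le s fun n _ => hf n).trans_eq (by simp)
  have hold := hsum (Icc 1 N)
  have hnew := hsum (Ico (N + 1) (M + 1))
  rw [Nat.card_Icc, Nat.add_sub_cancel] at hold
  rw [Nat.card_Ico, Nat.add_sub_add_right, Nat.cast_sub hNM] at hnew
  have hsplit : ∑ n ∈ Icc 1 M, f n = ∑ n ∈ Icc 1 N, f n + ∑ n ∈ Ico (N + 1) (M + 1), f n :=
    (sum_Ico_consecutive f (by lia : 1 ≤ N + 1) (by lia : N + 1 ≤ M + 1)).symm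
  have hinv : 0 ≤ (N : ℝ)⁻¹ - (M : ℝ)⁻¹ := sub_nonneg.mpr (inv_anti₀ hN0 hNM')
  calc _ = ‖((M : ℝ)⁻¹ : ℝ) * ∑ n ∈ Ico (N + 1) (M + 1), f n -
        ((N : ℝ)⁻¹ - (M : ℝ)⁻¹ : ℝ) * ∑ n ∈ Icc 1 N, f n‖ := by
        rw [hsplit]
        push_cast
        ring_nf
    _ ≤ (M : ℝ)⁻¹ * (M - N) + ((N : ℝ)⁻¹ - (M : ℝ)⁻¹) * N := by
        refine (norm_sub_le _ _).trans ?_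
        rw [norm_mul, norm_mul, Complex.norm_real, Complex.norm_real,
          Real.norm_of_nonneg (by positivity), Real.norm_of_nonneg hinv]
        gcongr
    _ = 2 * (1 - N / M) := by
        field_simp
        ring

section ExpSum

variable {m : ℕ}

lemma norm_expSum_sub_le (c ξ : Fin m → ℝ) {N M : ℕ} (hN : 1 ≤ N) (hNM : N ≤ M) :
    ‖expSum m c ξ M - expSum m c ξ N‖ ≤ 2 * (Real.log M - Real.log N) := by
  have hN0 : (0 : ℝ) < N := mod_cast hN
  have hM0 : (0 : ℝ) < M := mod_cast hN.trans hNM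
  have hlog := Real.log_le_sub_one_of_pos (div_pos hN0 hM0)
  rw [Real.log_div hN0.ne' hM0.ne'] at hlog
  calc ‖expSum m c ξ M - expSum m c ξ N‖ ≤ 2 * (1 - N / M) :=
        norm_inv_mul_sum_sub_le (fun n => (norm_eC _).le) hN hNM
    _ ≤ _ := by linarith

lemma norm_expSum_le_one (c ξ : Fin m → ℝ) (N : ℕ) : ‖expSum m c ξ N‖ ≤ 1 := by
  have hsum := norm_sum_eC_le (Icc 1 N) fun n => ∑ i, ξ i * (⌊(n : ℝ) ^ c i⌋ : ℝ)
  rw [Nat.card_Icc, Nat.add_sub_cancel] at hsum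
  rw [expSum, norm_mul, norm_inv, Complex.norm_natCast]
  exact inv_mul_le_one_of_le₀ hsum (by positivity)

lemma expSum_sub_round (c ξ : Fin m → ℝ) :
    expSum m c (fun i => ξ i - round (ξ i)) = expSum m c ξ := by
  have hphase (n : ℕ) : ∑ i, ξ i * (⌊(n : ℝ) ^ c i⌋ : ℝ) =
      ∑ i, (ξ i - round (ξ i)) * (⌊(n : ℝ) ^ c i⌋ : ℝ) +
        ((∑ i, round (ξ i) * ⌊(n : ℝ) ^ c i⌋ : ℤ) : ℝ) := by
    push_cast
    rw [← sum_add_distrib]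
    exact sum_congr rfl fun i _ => by ring
  ext N
  simp only [expSum, hphase, eC_add, eC_intCast, mul_one]

lemma abs_sum_mul_floor_rpow_le_phaseSize {c : Fin m → ℝ} (hpos : ∀ i, 0 < c i) (ξ : Fin m → ℝ)
    {t x : ℝ} (ht : 0 ≤ t) (htx : t ≤ x) :
    |∑ i, ξ i * (⌊t ^ c i⌋ : ℝ)| ≤ phaseSize c ξ x := by
  refine (abs_sum_le_sum_abs _ _).trans (sum_le_sum fun i _ => ?_)
  have hfloor : (0 : ℝ) ≤ ⌊t ^ c i⌋ := mod_cast Int.floor_nonneg.mpr (by positivity)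
  rw [abs_mul, abs_of_nonneg hfloor]
  gcongr
  exact (Int.floor_le _).trans (Real.rpow_le_rpow ht htx (hpos i).le)

lemma norm_expSum_sub_one_le {c : Fin m → ℝ} (hpos : ∀ i, 0 < c i) (ξ : Fin m → ℝ) {N : ℕ}
    (hN : 1 ≤ N) : ‖expSum m c ξ N - 1‖ ≤ 2 * Real.pi * phaseSize c ξ N := by
  have hN0 : (0 : ℝ) < N := mod_cast hN
  have haverage : expSum m c ξ N - 1 =
      (N : ℂ)⁻¹ * ∑ n ∈ Icc 1 N, (eC (∑ i, ξ i * (⌊(n : ℝ) ^ c i⌋ : ℝ)) - eC 0) := by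
    have hN0' : (N : ℂ) ≠ 0 := mod_cast hN0.ne'
    rw [sum_sub_distrib, mul_sub, expSum, eC_zero]
    simp [hN0']
  have hterm : ∀ n ∈ Icc 1 N, ‖eC (∑ i, ξ i * (⌊(n : ℝ) ^ c i⌋ : ℝ)) - eC 0‖ ≤
      2 * Real.pi * phaseSize c ξ N := fun n hn => by
    refine (norm_eC_sub_le _ _).trans ?_
    rw [sub_zero]
    gcongr
    exact abs_sum_mul_floor_rpow_le_phaseSize hpos ξ (by positivity) (mod_cast (mem_Icc.mp hn).2)
  rw [haverage, norm_mul, norm_inv, Complex.norm_natCast, inv_mul_le_iff₀ hN0]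
  refine (norm_sum_le_of_le _ hterm).trans_eq ?_
  rw [sum_const, nsmul_eq_mul, Nat.card_Icc, Nat.add_sub_cancel]

end ExpSum

/-- A chain of `J` consecutive `δ`-jumps of the sequence `a`, at the times `w 0 ≤ ⋯ ≤ w J`. The
times form an infinite sequence so that no arithmetic in `Fin (J + 1)` is needed. -/
structure IsJumpChain (a : ℕ → ℂ) (δ : ℝ) (w : ℕ → ℕ) (J : ℕ) : Prop where
  monotone : Monotone w
  one_le : ∀ j, 1 ≤ w j
  le_norm_sub : ∀ j < J, δ ≤ ‖a (w (j + 1)) - a (w j)‖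

lemma isJumpChain_clamp {a : ℕ → ℂ} {δ : ℝ} {J : ℕ} {u : Fin (J + 1) → ℕ} (hu : Monotone u)
    (hone : ∀ j, 1 ≤ u j) (hjump : ∀ j : Fin J, δ ≤ ‖a (u j.succ) - a (u j.castSucc)‖) :
    IsJumpChain a δ (fun j => u (Fin.clamp j J)) J where
  monotone := fun _ _ hij => hu (Fin.mk_le_mk.mpr (min_le_min_right J hij))
  one_le := fun _ => hone _
  le_norm_sub := fun j hj => by
    have hsucc : Fin.clamp (j + 1) J = Fin.succ ⟨j, hj⟩ := Fin.ext (min_eq_left hj)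
    have hcast : Fin.clamp j J = Fin.castSucc ⟨j, hj⟩ := Fin.ext (min_eq_left hj.le)
    rw [hsucc, hcast]
    exact hjump ⟨j, hj⟩

namespace IsJumpChain

variable {m : ℕ} {c ξ : Fin m → ℝ} {δ : ℝ} {w : ℕ → ℕ} {J : ℕ}

lemma cast_pos {a : ℕ → ℂ} (h : IsJumpChain a δ w J) (j : ℕ) : (0 : ℝ) < w j :=
  mod_cast h.one_le j

lemma cast_monotone {a : ℕ → ℂ} (h : IsJumpChain a δ w J) : Monotone fun j => (w j : ℝ) :=
  Nat.mono_cast.comp h.monotone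

lemma le_two (h : IsJumpChain (expSum m c ξ) δ w J) (hJ : 0 < J) : δ ≤ 2 :=
  calc δ ≤ ‖expSum m c ξ (w 1)‖ + ‖expSum m c ξ (w 0)‖ :=
        (h.le_norm_sub 0 hJ).trans (norm_sub_le _ _)
    _ ≤ 1 + 1 := add_le_add (norm_expSum_le_one c ξ _) (norm_expSum_le_one c ξ _)
    _ = 2 := one_add_one_eq_two

lemma mul_le_log_sub_log (h : IsJumpChain (expSum m c ξ) δ w J) (i : ℕ) :
    ∀ k, i + k ≤ J → k * (δ / 2) ≤ Real.log (w (i + k)) - Real.log (w i)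
  | 0, _ => by simp
  | k + 1, hk => by
    have hprev := mul_le_log_sub_log h i k (by lia)
    have hjump := (h.le_norm_sub (i + k) (by lia)).trans
      (norm_expSum_sub_le c ξ (h.one_le _) (h.monotone (Nat.le_succ _)))
    push_cast
    rw [← add_assoc]
    linarith

lemma le_phaseSize (hpos : ∀ i, 0 < c i) (h : IsJumpChain (expSum m c ξ) δ w J) (hJ : 0 < J) :
    δ / 16 ≤ phaseSize c ξ (w 1) := by
  have hsize₀ := phaseSize_nonneg c ξ (h.cast_pos 0).le
  have hsize₁ := phaseSize_nonneg c ξ (h.cast_pos 1).le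
  have hmono := phaseSize_mono hpos ξ (h.cast_pos 0).le (h.cast_monotone zero_le_one)
  have hpi := Real.pi_lt_four
  have hjump : δ ≤ 16 * phaseSize c ξ (w 1) :=
    calc δ ≤ ‖(expSum m c ξ (w 1) - 1) - (expSum m c ξ (w 0) - 1)‖ := by
          rw [sub_sub_sub_cancel_right]
          exact h.le_norm_sub 0 hJ
      _ ≤ ‖expSum m c ξ (w 1) - 1‖ + ‖expSum m c ξ (w 0) - 1‖ := norm_sub_le _ _
      _ ≤ 2 * Real.pi * phaseSize c ξ (w 1) + 2 * Real.pi * phaseSize c ξ (w 0) :=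
          add_le_add (norm_expSum_sub_one_le hpos ξ (h.one_le 1))
            (norm_expSum_sub_one_le hpos ξ (h.one_le 0))
      _ ≤ 2 * 4 * phaseSize c ξ (w 1) + 2 * 4 * phaseSize c ξ (w 1) := by gcongr
      _ = 16 * phaseSize c ξ (w 1) := by ring
  linarith

lemma lt_or_phaseSize_lt (hpos : ∀ i, 0 < c i) (h : IsJumpChain (expSum m c ξ) δ w J) {A : ℝ}
    (hA : ∀ N : ℕ, A ≤ N → A ≤ phaseSize c ξ N → ‖expSum m c ξ N‖ < δ / 2) {j : ℕ} (hj : j < J) :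
    (w j : ℝ) < A ∨ phaseSize c ξ (w j) < A := by
  by_contra! ⟨hlength, hsize⟩
  have hle : (w j : ℝ) ≤ w (j + 1) := h.cast_monotone (Nat.le_succ j)
  have hcurrent := hA (w j) hlength hsize
  have hnext := hA (w (j + 1)) (hlength.trans hle)
    (hsize.trans (phaseSize_mono hpos ξ (h.cast_pos j).le hle))
  linarith [(h.le_norm_sub j hj).trans (norm_sub_le _ _)]

lemma mul_le_of_norm_expSum_lt (hpos : ∀ i, 0 < c i) {a : ℝ} (ha0 : 0 < a) (ha : ∀ i, a ≤ c i)
    {r : ℕ} (h : IsJumpChain (expSum m c ξ) δ w (r + 2)) (hδ : 0 < δ) {A : ℝ} (hA1 : 1 ≤ A)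
    (hA : ∀ N : ℕ, A ≤ N → A ≤ phaseSize c ξ N → ‖expSum m c ξ N‖ < δ / 2)
    {L : ℝ} (hL : Real.log (16 / δ) ≤ L) (hL0 : 0 ≤ L) :
    r * (δ / 2) ≤ Real.log A + (Real.log A + L) / a := by
  have hlog := h.mul_le_log_sub_log 1 r (by lia)
  have hlogA : 0 ≤ Real.log A := Real.log_nonneg hA1
  rcases h.lt_or_phaseSize_lt hpos hA (j := 1 + r) (by lia) with hlength | hsize
  · have hfirst : 0 ≤ Real.log (w 1) := Real.log_nonneg (mod_cast h.one_le 1)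
    have hlast := Real.log_lt_log (h.cast_pos _) hlength
    have hrest : 0 ≤ (Real.log A + L) / a := by positivity
    linarith
  · have hx := h.cast_pos 1
    have hy := h.cast_pos (1 + r)
    have hgrowth : ((w (1 + r) : ℝ) / w 1) ^ a * (δ / 16) < A :=
      calc _ ≤ ((w (1 + r) : ℝ) / w 1) ^ a * phaseSize c ξ (w 1) := by
            gcongr
            exact h.le_phaseSize hpos (by lia)
        _ ≤ phaseSize c ξ (w (1 + r)) :=
            rpow_mul_phaseSize_le_of_le_exponents ha ξ hx (h.cast_monotone (Nat.le_add_right 1 r))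
        _ < A := hsize
    have hlogGrowth := Real.log_lt_log (by positivity) hgrowth
    rw [Real.log_mul (by positivity) (by positivity), Real.log_rpow (by positivity),
      Real.log_div hy.ne' hx.ne', ← inv_div, Real.log_inv] at hlogGrowth
    have hratio : r * (δ / 2) ≤ (Real.log A + L) / a := by
      rw [le_div_iff₀' ha0]
      linarith [mul_le_mul_of_nonneg_left hlog ha0.le]
    linarith

lemma exists_length_le (hpos : ∀ i, 0 < c i) (hinj : Function.Injective c)
    (hint : ∀ i, ∀ k : ℕ, c i ≠ k) : ∃ K F : ℝ, 0 < K ∧ 0 < F ∧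
      ∀ (δ : ℝ) (ξ : Fin m → ℝ) (w : ℕ → ℕ) (J : ℕ), 0 < δ → δ ≤ 2 → (∀ i, |ξ i| ≤ 1 / 2) →
        IsJumpChain (expSum m c ξ) δ w J → (J : ℝ) ≤ 2 + F / δ * Real.log (K / δ) := by
  obtain ⟨C, η, hC, hη, hdecay⟩ := exists_norm_expSum_le hpos hinj hint
  obtain ⟨a, ha0, ha⟩ := exists_pos_forall_le hpos
  refine ⟨4 * C + 16, 2 * (1 / η + (1 / η + 1) / a), by positivity, by positivity,
    fun δ ξ w J hδ hδ2 hξ h => ?_⟩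
  set K : ℝ := 4 * C + 16 with hK
  set A : ℝ := (K / δ) ^ (1 / η)
  have hKδ : 1 < K / δ := by
    rw [one_lt_div hδ]
    linarith
  have hA1 : 1 < A := Real.one_lt_rpow hKδ (by positivity)
  have hAη : C * A ^ (-η) < δ / 2 := by
    rw [← Real.rpow_mul (by positivity), mul_neg, one_div_mul_cancel hη.ne', Real.rpow_neg_one,
      inv_div, ← mul_div_assoc, div_lt_div_iff₀ (by positivity) two_pos]
    nlinarith
  have hL0 : 0 ≤ Real.log (K / δ) := Real.log_nonneg hKδ.le
  have hL : Real.log (16 / δ) ≤ Real.log (K / δ) := by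
    gcongr
    linarith
  rcases Nat.lt_or_ge J 2 with hJ | hJ
  · have hrest : 0 ≤ 2 * (1 / η + (1 / η + 1) / a) / δ * Real.log (K / δ) := by positivity
    have hJ2 : (J : ℝ) ≤ 2 := mod_cast hJ.le
    linarith
  · obtain ⟨r, rfl⟩ := Nat.exists_eq_add_of_le' hJ
    have hcount := h.mul_le_of_norm_expSum_lt hpos ha0 ha hδ hA1.le
      (fun N hN hsize => (hdecay A N ξ hA1 hN hξ hsize).trans_lt hAη) hL hL0
    rw [Real.log_rpow (by positivity)] at hcount
    have hr : (r : ℝ) ≤ 2 * (1 / η + (1 / η + 1) / a) / δ * Real.log (K / δ) :=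
      calc (r : ℝ) = r * (δ / 2) * (2 / δ) := by field_simp
        _ ≤ (1 / η * Real.log (K / δ) + (1 / η * Real.log (K / δ) + Real.log (K / δ)) / a) *
            (2 / δ) := by gcongr
        _ = _ := by ring
    push_cast
    linarith

end IsJumpChain

lemma exists_two_add_div_mul_log_le_rpow {K F s : ℝ} (hK : 0 < K) (hF : 0 < F) (hs : 1 < s) :
    ∃ C : ℝ, 0 < C ∧ ∀ δ : ℝ, 0 < δ → δ ≤ 2 → 2 + F / δ * Real.log (K / δ) ≤ C * δ ^ (-s) := by
  have hs1 : 0 < s - 1 := sub_pos.mpr hs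
  refine ⟨2 * 2 ^ s + F * K ^ (s - 1) / (s - 1), by positivity, fun δ hδ hδ2 => ?_⟩
  have hconst : 1 ≤ 2 ^ s * δ ^ (-s) := by
    rw [Real.rpow_neg hδ.le, ← div_eq_mul_inv, ← Real.div_rpow zero_le_two hδ.le]
    exact Real.one_le_rpow ((one_le_div hδ).mpr hδ2) (by linarith)
  have hsplit : δ ^ (-s) = (δ ^ (s - 1))⁻¹ * δ⁻¹ := by
    rw [← Real.rpow_neg hδ.le, ← Real.rpow_neg_one δ, ← Real.rpow_add hδ]
    ring_nf
  calc 2 + F / δ * Real.log (K / δ)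
      ≤ 2 * (2 ^ s * δ ^ (-s)) + F / δ * ((K / δ) ^ (s - 1) / (s - 1)) := by
        gcongr
        · linarith
        · exact Real.log_le_rpow_div (by positivity) hs1
    _ = (2 * 2 ^ s + F * K ^ (s - 1) / (s - 1)) * δ ^ (-s) := by
        rw [Real.div_rpow hK.le hδ.le, hsplit]
        ring

theorem stmt6_general {m : ℕ} {c : Fin m → ℝ} (hpos : ∀ i, 0 < c i) (hinj : Function.Injective c)
    (hint : ∀ i, ∀ k : ℕ, c i ≠ k) {s : ℝ} (hs : 1 < s) :
    ∃ C : ℝ, 0 < C ∧ ∀ δ : ℝ, 0 < δ → ∀ ξ : Fin m → ℝ,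
      ∀ J : ℕ, ∀ u : Fin (J + 1) → ℕ, Monotone u → (∀ j, 1 ≤ u j) →
        (∀ j : Fin J, δ ≤ ‖expSum m c ξ (u j.succ) - expSum m c ξ (u j.castSucc)‖) →
        (J : ℝ) ≤ C * δ ^ (-s) := by
  obtain ⟨K, F, hK, hF, hlength⟩ := IsJumpChain.exists_length_le hpos hinj hint
  obtain ⟨C, hC, hrpow⟩ := exists_two_add_div_mul_log_le_rpow hK hF hs
  refine ⟨C, hC, fun δ hδ ξ J u hu hone hjump => ?_⟩
  have hchain := isJumpChain_clamp hu hone hjump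
  rw [← expSum_sub_round] at hchain
  rcases Nat.eq_zero_or_pos J with rfl | hJ
  · rw [Nat.cast_zero]
    positivity
  · have hδ2 := hchain.le_two hJ
    exact (hlength δ _ _ J hδ hδ2 (fun i => abs_sub_round (ξ i)) hchain).trans (hrpow δ hδ hδ2)

/-- jump counting for exponential sums, Corollary 2.1 of the
paper: for non-integer `0 < c₁ < ⋯ < c_m` and `ε > 0` there is `C_ε`,
uniform in `ξ₁,…,ξ_m`, such that for every `δ > 0` the sequence of exponential
sums `(1/N) ∑_{n=1}^N e(ξ₁⌊n^{c₁}⌋+⋯+ξ_m⌊n^{c_m}⌋)` has at most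
`C_ε δ^{−(2+ε)}` jumps of size `δ`: any chain `N₀ ≤ ⋯ ≤ N_J` in `ℕ = {1,2,…}`
with `|a_{N_{j+1}} − a_{N_j}| ≥ δ` for all `j` satisfies `J ≤ C_ε δ^{−(2+ε)}`. -/
theorem stmt6 {m : ℕ} (hm : 0 < m) (c : Fin m → ℝ)
    (hpos : ∀ i, 0 < c i) (hmono : StrictMono c)
    (hint : ∀ i, ∀ k : ℤ, c i ≠ (k : ℝ))
    (ε : ℝ) (hε : 0 < ε) :
    ∃ C : ℝ, 0 < C ∧ ∀ δ : ℝ, 0 < δ → ∀ ξ : Fin m → ℝ,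
      ∀ J : ℕ, ∀ u : Fin (J + 1) → ℕ, Monotone u → (∀ j, 1 ≤ u j) →
        (∀ j : Fin J,
          δ ≤ ‖expSum m c ξ (u j.succ) - expSum m c ξ (u j.castSucc)‖) →
        (J : ℝ) ≤ C * δ ^ (-(2 + ε)) := by
  exact stmt6_general hpos hmono.injective (fun i k => mod_cast hint i k) (by linarith)

end
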